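/- arXiv:2002.09221 — 8 statements merged into one kernel-verified Lean document; each statement's English description precedes it below -/
import Mathlib

section
/- Let V : ℝⁿ → ℝ be C² with e^{-V} integrable and μ the probability measure with density proportional to e^{-V}. Let ρ : ℝⁿ → ℝ be continuous with ⟨u, Hess V(x) u⟩ ≥ ρ(x)‖u‖² for all x, u, ρ ≥ ρ₀ for some ρ₀ ∈ ℝ, and m := ∫ρ dμ > 0. Let c be a lower semicontinuous symmetric cost with c(x,x)=0 and L := ‖ρ‖_c < ∞, and let α : [0,∞) → [0,∞) be continuous, increasing, α(0)=0, such that α(T_c(ν,μ)) ≤ I(ν|μ) for every probability measure ν = f·μ with f positive and C¹. If r > 2 and ε ∈ (0,1) satisfy r·ρ₀ + α((1−ε)m/L) > 0, then for every smooth compactly supported g, Var_μ(g) ≤ (1/min(ε·m, ρ₀ + α((1−ε)m/L)/r)) ∫‖∇g‖² dμ. -/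
open MeasureTheory Real Set
open scoped ENNReal RealInnerProductSpace

/-- The transportation cost `T_c(ν,μ)`: infimum of `∫ c dπ` over couplings `π` of `ν` and `μ`. -/
noncomputable def transportCost {E : Type*} [MeasurableSpace E]
    (c : E → E → ℝ≥0∞) (ν μ : MeasureTheory.Measure E) : ℝ≥0∞ :=
  ⨅ cpl ∈ {cpl : MeasureTheory.Measure (E × E) |
      cpl.map Prod.fst = ν ∧ cpl.map Prod.snd = μ ∧ MeasureTheory.IsProbabilityMeasure cpl},
    ∫⁻ p, c p.1 p.2 ∂cpl

/-- The norm `‖ρ‖_c = sup_{x ≠ y} |ρ(x) - ρ(y)| / c(x,y)` (the diagonal contributes `0/0 = 0`). -/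
noncomputable def costLipNorm {E : Type*} (c : E → E → ℝ≥0∞) (ρ : E → ℝ) : ℝ≥0∞ :=
  ⨆ x, ⨆ y, ENNReal.ofReal |ρ x - ρ y| / c x y

/-
Write `L u = weightedDivergence V (∇ u)` for the generator of the Langevin diffusion, which is
symmetric in `L²(μ)`. A density `f = q²` is either so close to `μ` in transport cost that
`∫ ρ q² ∂μ` is at least `εm`, or has Fisher information `∫ ‖∇ q‖² ∂μ` at least `α((1-ε)m/L)`; in
both cases the Schrödinger form `∫ ‖∇ q‖² + ρ q² ∂μ` is at least `lam := min (εm) (ρ₀ + α(…)/r)`.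
Applied to a smoothing of `q = ‖∇ u‖`, and combined with Kato's inequality
`‖∇ ‖∇ u‖‖ ≤ ‖Hess u‖` and Bochner's formula
`∫ (L u)² ∂μ = ∫ ‖Hess u‖² + Hess V (∇ u, ∇ u) ∂μ`, this gives
`lam * ∫ ‖∇ u‖² ∂μ ≤ ∫ (L u)² ∂μ` for every test function `u`.

A function of `L²(μ)` orthogonal to every `L u` is constant: its mollifications satisfy a
Caccioppoli inequality whose right-hand side vanishes as the cut-off spreads out. Hence the `L u`
are dense in the mean-zero functions, and `⟪L u, g⟫² ≤ ∫ ‖∇ u‖² ∂μ * ∫ ‖∇ g‖² ∂μ` passes to the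
limit `L u → g - ∫ g ∂μ`, where it is the Poincaré inequality.
-/

open Filter Function Topology ContDiff Gradient Convolution
open ContinuousLinearMap (lsmul)
open scoped NNReal

variable {E : Type*} [NormedAddCommGroup E] [InnerProductSpace ℝ E]

section Gradient

variable [CompleteSpace E]

lemma contDiff_gradient {u : E → ℝ} {n : ℕ∞ω} (hu : ContDiff ℝ (n + 1) u) :
    ContDiff ℝ n (∇ u) :=
  (InnerProductSpace.toDual ℝ E).symm.contDiff.comp (hu.fderiv_right le_rfl)

lemma hasCompactSupport_gradient {u : E → ℝ} (hu : HasCompactSupport u) :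
    HasCompactSupport (∇ u) :=
  (hu.fderiv ℝ).comp_left (map_zero _)

lemma gradient_add {u v : E → ℝ} {x : E} (hu : DifferentiableAt ℝ u x)
    (hv : DifferentiableAt ℝ v x) : ∇ (u + v) x = ∇ u x + ∇ v x := by
  simp only [gradient, fderiv_add hu hv, map_add]

lemma gradient_const_smul (a : ℝ) (u : E → ℝ) (x : E) : ∇ (a • u) x = a • ∇ u x := by
  simp only [gradient, fderiv_const_smul_field, Pi.smul_apply, map_smulₛₗ, conj_trivial]

lemma inner_fderiv_gradient {u : E → ℝ} (hu : ContDiff ℝ 2 u) (x v w : E) :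
    ⟪fderiv ℝ (∇ u) x v, w⟫ = fderiv ℝ (fderiv ℝ u) x v w := by
  have hcoord : (fun y => ⟪∇ u y, w⟫) = fun y => fderiv ℝ u y w :=
    funext fun y => inner_gradient_left
  have hG := (contDiff_gradient hu).differentiable one_ne_zero x
  have hD := (hu.fderiv_right le_rfl).differentiable one_ne_zero x
  calc ⟪fderiv ℝ (∇ u) x v, w⟫
      = fderiv ℝ (fun y => ⟪∇ u y, w⟫) x v := by
        rw [fderiv_inner_apply ℝ hG (differentiableAt_const w)]
        simp
    _ = fderiv ℝ (fderiv ℝ u) x v w := by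
        rw [hcoord]
        simp [fderiv_clm_apply hD (differentiableAt_const w)]

lemma fderiv_gradient_isSymmetric {u : E → ℝ} (hu : ContDiff ℝ 2 u) (x : E) :
    (fderiv ℝ (∇ u) x : E →ₗ[ℝ] E).IsSymmetric := fun v w => by
  rw [ContinuousLinearMap.coe_coe, real_inner_comm _ v, inner_fderiv_gradient hu,
    inner_fderiv_gradient hu]
  exact hu.contDiffAt.isSymmSndFDerivAt (by simp) v w

end Gradient

section Divergence

/-- The divergence `tr DX` of a vector field `X`. -/
noncomputable def divergence (X : E → E) (x : E) : ℝ :=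
  LinearMap.trace ℝ E (fderiv ℝ X x)

/-- The divergence `e ^ V div (e ^ (-V) X)` of `X` with respect to `gibbs V`, so that
`-weightedDivergence V` is the adjoint of the gradient in `L²(gibbs V)`. -/
noncomputable def weightedDivergence (V : E → ℝ) (X : E → E) (x : E) : ℝ :=
  divergence X x - fderiv ℝ V x (X x)

lemma hasCompactSupport_divergence {X : E → E} (hXc : HasCompactSupport X) :
    HasCompactSupport (divergence X) :=
  (hXc.fderiv ℝ).mono fun x hx h0 => hx (by simp [divergence, h0])

lemma hasCompactSupport_weightedDivergence {V : E → ℝ} {X : E → E} (hXc : HasCompactSupport X) :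
    HasCompactSupport (weightedDivergence V X) :=
  (hasCompactSupport_divergence hXc).sub (hXc.mono fun x hx h0 => hx (by simp [h0]))

variable [FiniteDimensional ℝ E]

lemma divergence_smul {u : E → ℝ} {X : E → E} {x : E} (hu : DifferentiableAt ℝ u x)
    (hX : DifferentiableAt ℝ X x) :
    divergence (fun y => u y • X y) x = fderiv ℝ u x (X x) + u x * divergence X x := by
  have hsmulRight : ((fderiv ℝ u x).smulRight (X x) : E →ₗ[ℝ] E) =
    (fderiv ℝ u x : E →ₗ[ℝ] ℝ).smulRight (X x) := rfl
  rw [divergence, fderiv_fun_smul hu hX, ContinuousLinearMap.toLinearMap_add, map_add, hsmulRight,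
    LinearMap.trace_smulRight, ContinuousLinearMap.toLinearMap_smul, map_smul, add_comm]
  rfl

lemma weightedDivergence_smul {V u : E → ℝ} {X : E → E} {x : E} (hu : DifferentiableAt ℝ u x)
    (hX : DifferentiableAt ℝ X x) : weightedDivergence V (fun y => u y • X y) x =
      fderiv ℝ u x (X x) + u x * weightedDivergence V X x := by
  rw [weightedDivergence, divergence_smul hu hX, weightedDivergence, map_smul, smul_eq_mul]
  ring

lemma divergence_eq_comp_fderiv (X : E → E) :
    divergence X = LinearMap.toContinuousLinearMap
      (LinearMap.trace ℝ E ∘ₗ ContinuousLinearMap.coeLM ℝ) ∘ fderiv ℝ X :=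
  rfl

lemma contDiff_divergence {X : E → E} {n : ℕ∞ω} (hX : ContDiff ℝ (n + 1) X) :
    ContDiff ℝ n (divergence X) :=
  divergence_eq_comp_fderiv X ▸
    (ContinuousLinearMap.contDiff _).comp (hX.fderiv_right le_rfl)

lemma contDiff_weightedDivergence {V : E → ℝ} {X : E → E} {n : ℕ∞ω}
    (hV : ContDiff ℝ (n + 1) V) (hX : ContDiff ℝ (n + 1) X) :
    ContDiff ℝ n (weightedDivergence V X) :=
  (contDiff_divergence hX).sub ((hV.fderiv_right le_rfl).clm_apply (hX.of_le le_self_add))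

lemma divergence_fderiv_apply_self {X : E → E} (hX : ContDiff ℝ 2 X) (x : E) :
    divergence (fun y => fderiv ℝ X y (X y)) x =
      fderiv ℝ (divergence X) x (X x) + LinearMap.trace ℝ E (fderiv ℝ X x ∘L fderiv ℝ X x) := by
  have hD : DifferentiableAt ℝ (fderiv ℝ X) x :=
    (hX.fderiv_right le_rfl).differentiable one_ne_zero x
  have hsymm : (fderiv ℝ (fderiv ℝ X) x).flip (X x) = fderiv ℝ (fderiv ℝ X) x (X x) := by
    ext v
    exact hX.contDiffAt.isSymmSndFDerivAt (by simp) v (X x)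
  have hdiv : fderiv ℝ (divergence X) x (X x) =
      LinearMap.trace ℝ E (fderiv ℝ (fderiv ℝ X) x (X x)) := by
    rw [divergence_eq_comp_fderiv,
      ((ContinuousLinearMap.hasFDerivAt _).comp x hD.hasFDerivAt).fderiv]
    rfl
  rw [hdiv, divergence, fderiv_clm_apply hD (hX.differentiable two_ne_zero x), hsymm,
    ContinuousLinearMap.toLinearMap_add, map_add, add_comm]

lemma weightedDivergence_fderiv_apply_self {V : E → ℝ} (hV : ContDiff ℝ 2 V)
    {X : E → E} (hX : ContDiff ℝ 2 X) (x : E) :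
    weightedDivergence V (fun y => fderiv ℝ X y (X y)) x =
      fderiv ℝ (weightedDivergence V X) x (X x) +
        (LinearMap.trace ℝ E (fderiv ℝ X x ∘L fderiv ℝ X x) +
          fderiv ℝ (fderiv ℝ V) x (X x) (X x)) := by
  have hX' := hX.differentiable two_ne_zero x
  have hDV : DifferentiableAt ℝ (fderiv ℝ V) x :=
    (hV.fderiv_right le_rfl).differentiable one_ne_zero x
  have hdiv : DifferentiableAt ℝ (divergence X) x :=
    (contDiff_divergence (n := 1) hX).differentiable one_ne_zero x
  have hderiv : fderiv ℝ (weightedDivergence V X) x (X x) = fderiv ℝ (divergence X) x (X x) -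
      (fderiv ℝ V x (fderiv ℝ X x (X x)) + fderiv ℝ (fderiv ℝ V) x (X x) (X x)) := by
    have h := hdiv.hasFDerivAt.sub (hDV.hasFDerivAt.clm_apply hX'.hasFDerivAt)
    rw [HasFDerivAt.fderiv (f := weightedDivergence V X) h]
    simp
  rw [hderiv, weightedDivergence, divergence_fderiv_apply_self hX]
  ring

variable [MeasurableSpace E] [BorelSpace E]

lemma integral_divergence_eq_zero {X : E → E} (hX : ContDiff ℝ 1 X) (hXc : HasCompactSupport X) :
    ∫ x, divergence X x = 0 := by
  let b := stdOrthonormalBasis ℝ E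
  have hcoord (i) : fderiv ℝ (fun y => ⟪b i, X y⟫) = fun x => innerSL ℝ (b i) ∘L fderiv ℝ X x :=
    funext fun x => ((innerSL ℝ (b i)).hasFDerivAt.comp x
      (hX.differentiable one_ne_zero x).hasFDerivAt).fderiv
  have hpartial (i) : Integrable fun x => fderiv ℝ (fun y => ⟪b i, X y⟫) x (b i) :=
    (((contDiff_const.inner ℝ hX).continuous_fderiv one_ne_zero).clm_apply
      continuous_const).integrable_of_hasCompactSupport
      ((hXc.fderiv ℝ).mono' fun x hx => subset_tsupport _ fun h0 => hx (by simp [hcoord, h0]))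
  have hsum : divergence X = fun x => ∑ i, fderiv ℝ (fun y => ⟪b i, X y⟫) x (b i) := by
    funext x
    simp [divergence, LinearMap.trace_eq_sum_inner _ b, hcoord]
  rw [hsum, integral_finsetSum _ fun i _ => hpartial i]
  refine Finset.sum_eq_zero fun i _ => ?_
  have hint : Integrable fun x => ⟪b i, X x⟫ :=
    (contDiff_const.inner ℝ hX).continuous.integrable_of_hasCompactSupport
      (hXc.mono' fun x hx => subset_tsupport _ fun h0 => hx (by simp [h0]))
  have hIBP := integral_mul_fderiv_eq_neg_fderiv_mul_of_integrable (μ := volume) (v := b i)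
    (f := fun _ => (1 : ℝ)) (g := fun y => ⟪b i, X y⟫) (by simp) (by simpa using hpartial i)
    (by simpa using hint) (by simp)
    fun x _ => (contDiff_const.inner ℝ hX).differentiable one_ne_zero x
  simpa using hIBP

end Divergence

section Gibbs

variable [FiniteDimensional ℝ E] [MeasurableSpace E] [BorelSpace E] {V : E → ℝ}

/-- The Gibbs measure `exp (-V) dx` of the potential `V`, not normalised. -/
noncomputable def gibbs (V : E → ℝ) : Measure E :=
  volume.withDensity fun x => ENNReal.ofReal (exp (-V x))

lemma isLocallyFiniteMeasure_gibbs (hV : Continuous V) : IsLocallyFiniteMeasure (gibbs V) :=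
  IsLocallyFiniteMeasure.withDensity_ofReal (by fun_prop)

lemma gibbs_zero : gibbs (0 : E → ℝ) = volume := by
  simp [gibbs]

lemma exists_restrict_gibbs_le_smul_gibbs {W : E → ℝ} (hV : Continuous V) (hW : Continuous W)
    {K : Set E} (hK : IsCompact K) : ∃ C : ℝ≥0, (gibbs V).restrict K ≤ C • gibbs W := by
  obtain ⟨C, hC⟩ := (hK.image (hW.sub hV).rexp).bddAbove
  refine ⟨C.toNNReal, ?_⟩
  calc (gibbs V).restrict K
      = (volume.restrict K).withDensity fun x => ENNReal.ofReal (exp (-V x)) :=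
        restrict_withDensity hK.measurableSet _
    _ ≤ (volume.restrict K).withDensity
          (ENNReal.ofReal C • fun x => ENNReal.ofReal (exp (-W x))) := by
        refine withDensity_mono (ae_restrict_of_forall_mem hK.measurableSet fun x hx => ?_)
        have hx' : exp (W x - V x) ≤ C := hC (mem_image_of_mem _ hx)
        rw [Pi.smul_apply, smul_eq_mul, ← ENNReal.ofReal_mul' (exp_pos _).le]
        refine ENNReal.ofReal_le_ofReal ?_
        calc exp (-V x) = exp (W x - V x) * exp (-W x) := by rw [← exp_add]; ring_nf
          _ ≤ C * exp (-W x) := by gcongr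
    _ = C.toNNReal • (gibbs W).restrict K := by
        rw [withDensity_smul _ (by fun_prop), ← restrict_withDensity hK.measurableSet]
        rfl
    _ ≤ C.toNNReal • gibbs W := by gcongr; exact Measure.restrict_le_self

lemma integral_gibbs (hV : Continuous V) {F : Type*} [NormedAddCommGroup F] [NormedSpace ℝ F]
    (f : E → F) : ∫ x, f x ∂gibbs V = ∫ x, exp (-V x) • f x := by
  rw [gibbs, integral_withDensity_eq_integral_toReal_smul (by fun_prop) (by simp)]
  simp only [ENNReal.toReal_ofReal (exp_pos _).le]

lemma integral_weightedDivergence_eq_zero (hV : ContDiff ℝ 1 V) {X : E → E}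
    (hX : ContDiff ℝ 1 X) (hXc : HasCompactSupport X) :
    ∫ x, weightedDivergence V X x ∂gibbs V = 0 := by
  have hdiv (x) : exp (-V x) • weightedDivergence V X x =
      divergence (fun y => exp (-V y) • X y) x := by
    have hV' := hV.differentiable one_ne_zero x
    rw [divergence_smul hV'.fun_neg.exp (hX.differentiable one_ne_zero x),
      hV'.hasFDerivAt.fun_neg.exp.fderiv]
    simp [weightedDivergence]
    ring
  rw [integral_gibbs hV.continuous, integral_congr_ae (ae_of_all _ hdiv)]
  exact integral_divergence_eq_zero (hV.neg.exp.smul hX) hXc.smul_left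

lemma integral_fderiv_apply_gibbs (hV : ContDiff ℝ 1 V) {u : E → ℝ} (hu : ContDiff ℝ 1 u)
    {X : E → E} (hX : ContDiff ℝ 1 X) (hXc : HasCompactSupport X) :
    ∫ x, fderiv ℝ u x (X x) ∂gibbs V = -∫ x, u x * weightedDivergence V X x ∂gibbs V := by
  have := isLocallyFiniteMeasure_gibbs hV.continuous
  have hzero : ∫ x, weightedDivergence V (fun y => u y • X y) x ∂gibbs V = 0 :=
    integral_weightedDivergence_eq_zero hV (hu.smul hX) hXc.smul_left
  rw [integral_congr_ae (ae_of_all _ fun x => weightedDivergence_smul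
    (hu.differentiable one_ne_zero x) (hX.differentiable one_ne_zero x)), integral_add] at hzero
  · exact eq_neg_of_add_eq_zero_left hzero
  · exact ((hu.continuous_fderiv one_ne_zero).clm_apply
      hX.continuous).integrable_of_hasCompactSupport
      (hXc.mono fun x hx h0 => hx (by simp [h0]))
  · exact (hu.continuous.mul
      (contDiff_weightedDivergence (n := 0) hV hX).continuous).integrable_of_hasCompactSupport
      (hasCompactSupport_weightedDivergence hXc).mul_left

lemma integral_weightedDivergence_sq (hV : ContDiff ℝ 2 V) {X : E → E} (hX : ContDiff ℝ 2 X)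
    (hXc : HasCompactSupport X) :
    ∫ x, weightedDivergence V X x ^ 2 ∂gibbs V =
      ∫ x, (LinearMap.trace ℝ E (fderiv ℝ X x ∘L fderiv ℝ X x) +
        fderiv ℝ (fderiv ℝ V) x (X x) (X x)) ∂gibbs V := by
  have := isLocallyFiniteMeasure_gibbs hV.continuous
  have hV1 : ContDiff ℝ 1 V := hV.of_le one_le_two
  have hdX : ContDiff ℝ 1 fun x => fderiv ℝ X x (X x) :=
    (hX.fderiv_right le_rfl).clm_apply (hX.of_le one_le_two)
  have hdXc : HasCompactSupport fun x => fderiv ℝ X x (X x) :=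
    hXc.mono fun x hx h0 => hx (by simp [h0])
  have hδ : ContDiff ℝ 1 (weightedDivergence V X) := contDiff_weightedDivergence hV hX
  have hδint : Integrable (fun x => fderiv ℝ (weightedDivergence V X) x (X x)) (gibbs V) :=
    ((hδ.continuous_fderiv one_ne_zero).clm_apply hX.continuous).integrable_of_hasCompactSupport
      (hXc.mono fun x hx h0 => hx (by simp [h0]))
  have hdXint : Integrable (weightedDivergence V fun x => fderiv ℝ X x (X x)) (gibbs V) :=
    (contDiff_weightedDivergence (n := 0) hV1 hdX).continuous.integrable_of_hasCompactSupport
      (hasCompactSupport_weightedDivergence hdXc)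
  have hzero := integral_weightedDivergence_eq_zero hV1 hdX hdXc
  have hIBP := integral_fderiv_apply_gibbs hV1 hδ (hX.of_le one_le_two) hXc
  calc ∫ x, weightedDivergence V X x ^ 2 ∂gibbs V
      = ∫ x, (weightedDivergence V (fun y => fderiv ℝ X y (X y)) x -
          fderiv ℝ (weightedDivergence V X) x (X x)) ∂gibbs V := by
        rw [integral_sub hdXint hδint, hzero, hIBP]
        simp [sq]
    _ = _ := by
        simp only [weightedDivergence_fderiv_apply_self hV hX, add_sub_cancel_left]

end Gibbs

section Mollification

lemma eLpNorm_integral_le_of_forall_ae {X Y F : Type*} [MeasurableSpace X] [MeasurableSpace Y]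
    [NormedAddCommGroup F] [NormedSpace ℝ F] {μ : Measure X} [SFinite μ] {κ : Measure Y}
    [IsProbabilityMeasure κ] {H : X → Y → F} (hH : AEStronglyMeasurable (uncurry H) (μ.prod κ))
    {p C : ℝ≥0∞} (hp : 1 ≤ p) (hp_top : p ≠ ⊤)
    (hC : ∀ᵐ y ∂κ, eLpNorm (fun x => H x y) p μ ≤ C) :
    eLpNorm (fun x => ∫ y, H x y ∂κ) p μ ≤ C := by
  have hp0 : p ≠ 0 := (zero_lt_one.trans_le hp).ne'
  have hpr : 0 < p.toReal := ENNReal.toReal_pos hp0 hp_top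
  have hJensen : ∀ᵐ x ∂μ, ‖∫ y, H x y ∂κ‖ₑ ^ p.toReal ≤ ∫⁻ y, ‖H x y‖ₑ ^ p.toReal ∂κ := by
    filter_upwards [hH.prodMk_left] with x hx
    rw [← ENNReal.le_rpow_inv_iff hpr, ← one_div,
      ← eLpNorm_eq_lintegral_rpow_enorm_toReal hp0 hp_top]
    exact (enorm_integral_le_lintegral_enorm _).trans <|
      eLpNorm_one_eq_lintegral_enorm.symm.le.trans (eLpNorm_le_eLpNorm_of_exponent_le hp hx)
  rw [eLpNorm_eq_lintegral_rpow_enorm_toReal hp0 hp_top, one_div, ENNReal.rpow_inv_le_iff hpr]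
  calc ∫⁻ x, ‖∫ y, H x y ∂κ‖ₑ ^ p.toReal ∂μ
      ≤ ∫⁻ x, ∫⁻ y, ‖H x y‖ₑ ^ p.toReal ∂κ ∂μ := lintegral_mono_ae hJensen
    _ = ∫⁻ y, ∫⁻ x, ‖H x y‖ₑ ^ p.toReal ∂μ ∂κ :=
        lintegral_lintegral_swap (hH.enorm.pow_const _)
    _ ≤ ∫⁻ _, C ^ p.toReal ∂κ := lintegral_mono_ae <| hC.mono fun y hy => by
        rwa [eLpNorm_eq_lintegral_rpow_enorm_toReal hp0 hp_top, one_div,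
          ENNReal.rpow_inv_le_iff hpr] at hy
    _ = C ^ p.toReal := by simp

variable [FiniteDimensional ℝ E] [MeasurableSpace E] [BorelSpace E]
  {F : Type*} [NormedAddCommGroup F] {p : ℝ≥0∞} {f : E → F}

lemma tendsto_eLpNorm_translate_sub (hp : 1 ≤ p) (hp_top : p ≠ ⊤) (hf : MemLp f p) :
    Tendsto (fun y => eLpNorm (fun x => f (x - y) - f x) p) (𝓝 0) (𝓝 0) := by
  have := Fact.mk hp
  let shift : C(E, C(E, E)) := ContinuousMap.curry ⟨fun q => q.2 - q.1, by fun_prop⟩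
  have hshift (y : E) : MeasurePreserving (shift y) := measurePreserving_sub_right volume y
  have hcont : Continuous fun y => Lp.compMeasurePreserving (shift y) (hshift y) hf.toLp :=
    continuous_const.compMeasurePreservingLp shift.continuous hshift hp_top
  have heq (y : E) : ‖Lp.compMeasurePreserving (shift y) (hshift y) hf.toLp - hf.toLp‖ₑ =
      eLpNorm (fun x => f (x - y) - f x) p := by
    rw [Lp.toLp_compMeasurePreserving, ← MemLp.toLp_sub, Lp.enorm_toLp]
    rfl
  simpa [heq] using ((hcont.tendsto 0).sub_const hf.toLp).enorm

lemma eLpNorm_convolution_sub_le [NormedSpace ℝ F] [CompleteSpace F] (hp : 1 ≤ p)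
    (hp_top : p ≠ ⊤) (hf : MemLp f p) {k : E → ℝ} (hk : Continuous k) (hkc : HasCompactSupport k)
    (hk_nonneg : ∀ x, 0 ≤ k x) (hk_int : ∫ x, k x = 1) {C : ℝ≥0∞}
    (hC : ∀ y ∈ support k, eLpNorm (fun x => f (x - y) - f x) p ≤ C) :
    eLpNorm (k ⋆ f - f) p ≤ C := by
  let κ : Measure E := volume.withDensity fun y => ENNReal.ofReal (k y)
  have hkI : Integrable k := hk.integrable_of_hasCompactSupport hkc
  have : IsProbabilityMeasure κ := ⟨by
    rw [withDensity_apply _ .univ, setLIntegral_univ,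
      ← ofReal_integral_eq_lintegral_ofReal hkI (ae_of_all _ hk_nonneg), hk_int,
      ENNReal.ofReal_one]⟩
  have hloc : LocallyIntegrable f := hf.locallyIntegrable hp
  have hconv (x : E) : (k ⋆ f - f) x = ∫ y, (f (x - y) - f x) ∂κ := by
    have hint : Integrable fun y => k y • f (x - y) :=
      hkc.convolutionExists_left (lsmul ℝ ℝ) hk hloc x
    rw [integral_withDensity_eq_integral_toReal_smul (by fun_prop) (by simp)]
    simp only [ENNReal.toReal_ofReal (hk_nonneg _), smul_sub]
    rw [integral_sub hint (hkI.smul_const _), integral_smul_const, hk_int, one_smul]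
    rfl
  have hmeas : AEStronglyMeasurable (uncurry fun x y => f (x - y) - f x) (volume.prod κ) := by
    refine AEStronglyMeasurable.mono_ac
      (Measure.AbsolutelyContinuous.rfl.prod (withDensity_absolutelyContinuous _ _)) ?_
    exact (hf.1.comp_quasiMeasurePreserving (quasiMeasurePreserving_sub volume volume)).sub
      hf.1.comp_fst
  rw [show (k ⋆ f - f) = _ from funext hconv]
  refine eLpNorm_integral_le_of_forall_ae hmeas hp hp_top ?_
  refine (ae_withDensity_iff (by fun_prop)).2 (ae_of_all _ fun y hy => hC y ?_)
  exact fun h0 => hy (by simp [h0])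

lemma tendsto_eLpNorm_convolution_sub [NormedSpace ℝ F] [CompleteSpace F] (hp : 1 ≤ p)
    (hp_top : p ≠ ⊤) (hf : MemLp f p) {φ : ℕ → ContDiffBump (0 : E)}
    (hφ : Tendsto (fun n => (φ n).rOut) atTop (𝓝 0)) :
    Tendsto (fun n => eLpNorm ((φ n).normed volume ⋆ f - f) p) atTop (𝓝 0) := by
  rw [ENNReal.tendsto_nhds_zero]
  intro η hη
  have hball := (ENNReal.tendsto_nhds_zero.1 (tendsto_eLpNorm_translate_sub hp hp_top hf)) η hη
  obtain ⟨δ, hδ, hδη⟩ := Metric.eventually_nhds_iff_ball.1 hball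
  filter_upwards [hφ.eventually_lt_const hδ] with n hn
  refine eLpNorm_convolution_sub_le hp hp_top hf (φ n).continuous_normed
    (φ n).hasCompactSupport_normed (φ n).nonneg_normed (φ n).integral_normed fun y hy => hδη y ?_
  rw [(φ n).support_normed_eq] at hy
  exact Metric.ball_subset_ball hn.le hy

lemma tendsto_eLpNorm_convolution_sub_restrict [NormedSpace ℝ F] [CompleteSpace F] (hp : 1 ≤ p)
    (hp_top : p ≠ ⊤) (hf : ∀ K : Set E, IsCompact K → MemLp f p (volume.restrict K))
    {φ : ℕ → ContDiffBump (0 : E)} (hφ : Tendsto (fun n => (φ n).rOut) atTop (𝓝 0))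
    {K : Set E} (hK : IsCompact K) :
    Tendsto (fun n => eLpNorm ((φ n).normed volume ⋆ f - f) p (volume.restrict K)) atTop (𝓝 0) := by
  let K₁ := Metric.cthickening 1 K
  have hK₁ : IsCompact K₁ := hK.cthickening
  have hf₁ : MemLp (K₁.indicator f) p :=
    (memLp_indicator_iff_restrict hK₁.measurableSet).2 (hf K₁ hK₁)
  have hlocal : ∀ᶠ n in atTop, ∀ x ∈ K,
      ((φ n).normed volume ⋆ f - f) x =
        ((φ n).normed volume ⋆ K₁.indicator f - K₁.indicator f) x := by
    filter_upwards [hφ.eventually_lt_const one_pos] with n hn x hx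
    have hxK₁ : x ∈ K₁ := Metric.self_subset_cthickening K hx
    simp only [Pi.sub_apply, indicator_of_mem hxK₁, sub_left_inj]
    refine integral_congr_ae (ae_of_all _ fun y => ?_)
    by_cases hy : y ∈ support ((φ n).normed volume)
    · have hmem : x - y ∈ K₁ := by
        rw [(φ n).support_normed_eq, mem_ball_zero_iff] at hy
        refine Metric.mem_cthickening_of_dist_le _ x 1 K hx ?_
        simpa using (hy.trans hn).le
      simp only [indicator_of_mem hmem]
    · simp [notMem_support.1 hy]
  refine tendsto_of_tendsto_of_tendsto_of_le_of_le' tendsto_const_nhds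
    (tendsto_eLpNorm_convolution_sub hp hp_top hf₁ hφ) (Eventually.of_forall fun _ => zero_le) ?_
  filter_upwards [hlocal] with n hn
  exact (eLpNorm_congr_ae (ae_restrict_of_forall_mem hK.measurableSet hn)).trans_le
    (eLpNorm_mono_measure _ Measure.restrict_le_self)

lemma tendsto_eLpNorm_gibbs_of_norm_le_mul_convolution_sub [NormedSpace ℝ F] [CompleteSpace F]
    {G : Type*} [NormedAddCommGroup G] {V a : E → ℝ} (hV : Continuous V) (ha : Continuous a)
    (hac : HasCompactSupport a) (hp : 1 ≤ p) (hp_top : p ≠ ⊤)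
    (hf : ∀ K : Set E, IsCompact K → MemLp f p (volume.restrict K))
    {φ : ℕ → ContDiffBump (0 : E)} (hφ : Tendsto (fun n => (φ n).rOut) atTop (𝓝 0))
    {g : ℕ → E → G}
    (hg : ∀ n x, ‖g n x‖ ≤ a x * ‖((φ n).normed volume ⋆ f - f) x‖) :
    Tendsto (fun n => eLpNorm (g n) p (gibbs V)) atTop (𝓝 0) := by
  have hK : IsCompact (tsupport a) := hac
  obtain ⟨C, hC⟩ := exists_restrict_gibbs_le_smul_gibbs hV continuous_zero hK
  obtain ⟨A, hA⟩ := ha.bounded_above_of_compact_support hac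
  have hzero (n) : ∀ x ∉ tsupport a, g n x = 0 := fun x hx => by
    simpa [image_eq_zero_of_notMem_tsupport hx] using hg n x
  have hle (n) : eLpNorm (g n) p (gibbs V) ≤ ENNReal.ofReal A * ((C : ℝ≥0∞) ^ (1 / p).toReal *
      eLpNorm ((φ n).normed volume ⋆ f - f) p (volume.restrict (tsupport a))) := by
    rw [← eLpNorm_restrict_eq_of_support_subset (s := tsupport a)
      fun x hx => by_contra fun h => hx (hzero n x h)]
    refine (eLpNorm_le_mul_eLpNorm_of_ae_le_mul (ae_of_all _ fun x => (hg n x).trans <|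
      mul_le_mul_of_nonneg_right ((le_abs_self _).trans (hA x)) (norm_nonneg _)) p).trans ?_
    gcongr
    refine eLpNorm_le_of_measure_le_smul ?_
    rw [gibbs_zero] at hC
    simpa [Measure.restrict_smul, Measure.restrict_restrict_of_subset subset_rfl]
      using Measure.restrict_mono_measure hC (tsupport a)
  refine tendsto_of_tendsto_of_tendsto_of_le_of_le tendsto_const_nhds ?_ (fun _ => zero_le) hle
  have hlim := tendsto_eLpNorm_convolution_sub_restrict hp hp_top hf hφ hK
  have hCtop : (C : ℝ≥0∞) ^ (1 / p).toReal ≠ ⊤ := by finiteness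
  simpa using ENNReal.Tendsto.const_mul (ENNReal.Tendsto.const_mul hlim (Or.inr hCtop))
    (Or.inr ENNReal.ofReal_ne_top)

end Mollification

section Convolution

lemma fderiv_comp_const_sub {F : Type*} [NormedAddCommGroup F] [NormedSpace ℝ F] {f : E → F}
    (hf : Differentiable ℝ f) (x y : E) :
    fderiv ℝ (fun z => f (x - z)) y = -fderiv ℝ f (x - y) := by
  have h := (hf (x - y)).hasFDerivAt.comp y ((hasFDerivAt_id y).const_sub x)
  exact h.fderiv.trans (by ext; simp)

lemma divergence_add {X Y : E → E} {x : E} (hX : DifferentiableAt ℝ X x)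
    (hY : DifferentiableAt ℝ Y x) : divergence (X + Y) x = divergence X x + divergence Y x := by
  rw [divergence, fderiv_add hX hY, ContinuousLinearMap.toLinearMap_add, map_add]
  rfl

variable [FiniteDimensional ℝ E] [MeasurableSpace E] [BorelSpace E]

lemma divergence_convolution {F G : Type*} [NormedAddCommGroup F] [NormedSpace ℝ F]
    [NormedAddCommGroup G] [NormedSpace ℝ G] (L : F →L[ℝ] G →L[ℝ] E) {k : E → F} {f : E → G}
    (hk : ContDiff ℝ 1 k) (hkc : HasCompactSupport k) (hf : LocallyIntegrable f) (x : E) :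
    divergence (k ⋆[L] f) x =
      ∫ t, LinearMap.trace ℝ E (L.flip (f (x - t)) ∘L fderiv ℝ k t) := by
  have hint := (hkc.fderiv ℝ).convolutionExists_left (L.precompL E)
    (hk.continuous_fderiv one_ne_zero) hf x
  rw [divergence_eq_comp_fderiv, comp_apply,
    (hkc.hasFDerivAt_convolution_left L hk hf x).fderiv, convolution_def,
    ← ContinuousLinearMap.integral_comp_comm _ hint]
  rfl

lemma gradient_convolution {k f : E → ℝ} (hk : ContDiff ℝ 1 k) (hkc : HasCompactSupport k)
    (hf : LocallyIntegrable f) :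
    ∇ (k ⋆ f) = ∇ k ⋆[(lsmul ℝ ℝ).flip] f := by
  refine funext fun x => ext_inner_right ℝ fun v => ?_
  have hint := (hkc.fderiv ℝ).convolutionExists_left
    ((lsmul ℝ ℝ).precompL E) (hk.continuous_fderiv one_ne_zero) hf x
  have hint' := (hasCompactSupport_gradient hkc).convolutionExists_left
    (lsmul ℝ ℝ).flip (contDiff_gradient (n := 0) hk).continuous hf x
  rw [inner_gradient_left, (hkc.hasFDerivAt_convolution_left _ hk hf x).fderiv, convolution_def,
    convolution_def, ContinuousLinearMap.integral_apply hint, real_inner_comm,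
    ← integral_inner hint']
  simp [ContinuousLinearMap.precompL_apply, inner_smul_right, inner_gradient_right, mul_comm]

lemma divergence_gradient_convolution {k f : E → ℝ} (hk : ContDiff ℝ 2 k)
    (hkc : HasCompactSupport k) (hf : LocallyIntegrable f) (x : E) :
    divergence (∇ (k ⋆ f)) x = ∫ t, divergence (∇ k) t * f (x - t) := by
  rw [gradient_convolution (hk.of_le one_le_two) hkc hf,
    divergence_convolution _ (contDiff_gradient hk) (hasCompactSupport_gradient hkc) hf]
  refine integral_congr_ae (ae_of_all _ fun t => ?_)
  exact ((LinearMap.trace ℝ E).map_smul (f (x - t)) (fderiv ℝ (∇ k) t : E →ₗ[ℝ] E)).trans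
    (mul_comm _ _)

lemma divergence_smul_convolution {k : E → ℝ} {F : E → E} (hk : ContDiff ℝ 1 k)
    (hkc : HasCompactSupport k) (hF : LocallyIntegrable F) (x : E) :
    divergence (k ⋆ F) x = ∫ t, fderiv ℝ k t (F (x - t)) := by
  rw [divergence_convolution _ hk hkc hF]
  exact integral_congr_ae (ae_of_all _ fun t =>
    LinearMap.trace_smulRight (fderiv ℝ k t : E →ₗ[ℝ] ℝ) (F (x - t)))

lemma divergence_gradient_convolution_add {k f : E → ℝ} {F : E → E} (hk : ContDiff ℝ 2 k)
    (hkc : HasCompactSupport k) (hf : LocallyIntegrable f) (hF : LocallyIntegrable F) (x : E) :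
    divergence (∇ (k ⋆ f) + k ⋆ F) x =
      ∫ y, (f y * divergence (∇ fun z => k (x - z)) y -
        fderiv ℝ (fun z => k (x - z)) y (F y)) := by
  have hk1 : ContDiff ℝ 1 k := hk.of_le one_le_two
  have hDk : ContDiff ℝ 1 (∇ k) := contDiff_gradient hk
  have hDkc := hasCompactSupport_gradient hkc
  have hgrad (y) : ∇ (fun z => k (x - z)) y = -∇ k (x - y) := by
    simp [gradient, fderiv_comp_const_sub (hk.differentiable two_ne_zero)]
  have hdiv (y) : divergence (∇ fun z => k (x - z)) y = divergence (∇ k) (x - y) := by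
    rw [funext hgrad, divergence, fderiv_fun_neg,
      fderiv_comp_const_sub (hDk.differentiable one_ne_zero), neg_neg, divergence]
  have hdivc : HasCompactSupport (divergence (∇ k)) := hasCompactSupport_divergence hDkc
  have hintf : Integrable fun t => divergence (∇ k) t * f (x - t) :=
    hdivc.convolutionExists_left (lsmul ℝ ℝ)
      (contDiff_divergence (n := 0) hDk).continuous hf x
  have hintF : Integrable fun t => fderiv ℝ k t (F (x - t)) :=
    (hkc.fderiv ℝ).convolutionExists_left (ContinuousLinearMap.id ℝ (E →L[ℝ] ℝ))
      (hk1.continuous_fderiv one_ne_zero) hF x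
  have hsmoothf : ContDiff ℝ 1 (∇ (k ⋆ f)) :=
    contDiff_gradient (hkc.contDiff_convolution_left (n := 2) _ hk hf)
  have hsmoothF : ContDiff ℝ 1 (k ⋆ F) :=
    hkc.contDiff_convolution_left (n := 1) _ hk1 hF
  rw [divergence_add (hsmoothf.differentiable one_ne_zero x)
    (hsmoothF.differentiable one_ne_zero x), divergence_gradient_convolution hk hkc hf,
    divergence_smul_convolution hk1 hkc hF, ← integral_add hintf hintF,
    ← integral_sub_left_eq_self _ volume x]
  refine integral_congr_ae (ae_of_all _ fun y => ?_)
  simp only [sub_sub_cancel, hdiv, fderiv_comp_const_sub (hk.differentiable two_ne_zero)]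
  simp [mul_comm]

end Convolution

section Caccioppoli

lemma norm_le_add_of_inner_add_add_eq_zero {h s b : E} (horth : ⟪h + s, h + b⟫ = 0) :
    ‖h‖ ≤ ‖s‖ + ‖b‖ := by
  have hidentity : ‖h + s + b‖ ^ 2 + ‖h‖ ^ 2 = ‖s‖ ^ 2 + ‖b‖ ^ 2 := by
    simp only [← real_inner_self_eq_norm_sq, inner_add_left, inner_add_right,
      real_inner_comm h, real_inner_comm s b] at horth ⊢
    linarith
  exact abs_le_of_sq_le_sq' (by nlinarith [norm_nonneg s, norm_nonneg b]) (by positivity) |>.2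

lemma inner_toLp_toLp {Ω : Type*} [MeasurableSpace Ω] {μ : Measure Ω} {f g : Ω → E}
    (hf : MemLp f 2 μ) (hg : MemLp g 2 μ) : ⟪hf.toLp, hg.toLp⟫ = ∫ x, ⟪f x, g x⟫ ∂μ := by
  rw [L2.inner_def]
  refine integral_congr_ae ?_
  filter_upwards [hf.coeFn_toLp, hg.coeFn_toLp] with x hfx hgx
  rw [hfx, hgx]

lemma enorm_integral_inner_le {Ω : Type*} [MeasurableSpace Ω] {μ : Measure Ω} {f g : Ω → E}
    (hf : MemLp f 2 μ) (hg : MemLp g 2 μ) :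
    ‖∫ x, ⟪f x, g x⟫ ∂μ‖ₑ ≤ eLpNorm f 2 μ * eLpNorm g 2 μ := by
  rw [← inner_toLp_toLp hf hg, ← Lp.enorm_toLp hf, ← Lp.enorm_toLp hg]
  simp only [enorm_eq_nnnorm]
  exact_mod_cast nnnorm_inner_le_nnnorm (𝕜 := ℝ) hf.toLp hg.toLp

variable [FiniteDimensional ℝ E] [MeasurableSpace E] [BorelSpace E] {V : E → ℝ}

lemma eLpNorm_smul_gradient_le (hV : ContDiff ℝ 1 V) {w χ : E → ℝ} (hw : ContDiff ℝ 1 w)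
    (hχ : ContDiff ℝ 1 χ) (hχc : HasCompactSupport χ) {X : E → E} (hX : ContDiff ℝ 1 X)
    (hXV : ∀ x, weightedDivergence V X x = 0) :
    eLpNorm (fun x => χ x • ∇ w x) 2 (gibbs V) ≤
      eLpNorm (fun x => χ x • (X x - ∇ w x)) 2 (gibbs V) +
        2 * eLpNorm (fun x => w x • ∇ χ x) 2 (gibbs V) := by
  have := isLocallyFiniteMeasure_gibbs hV.continuous
  have hDw : Continuous (∇ w) := (contDiff_gradient (n := 0) hw).continuous
  have hDχ : Continuous (∇ χ) := (contDiff_gradient (n := 0) hχ).continuous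
  have hH : MemLp (fun x => χ x • ∇ w x) 2 (gibbs V) :=
    (hχ.continuous.smul hDw).memLp_of_hasCompactSupport hχc.smul_right
  have hS : MemLp (fun x => χ x • (X x - ∇ w x)) 2 (gibbs V) :=
    (hχ.continuous.smul (hX.continuous.sub hDw)).memLp_of_hasCompactSupport hχc.smul_right
  have hB : MemLp (fun x => w x • ∇ χ x) 2 (gibbs V) :=
    (hw.continuous.smul hDχ).memLp_of_hasCompactSupport (hasCompactSupport_gradient hχc).smul_left
  have horth : ⟪hH.toLp + hS.toLp, hH.toLp + (2 : ℝ) • hB.toLp⟫ = 0 := by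
    rw [← MemLp.toLp_const_smul, ← MemLp.toLp_add, ← MemLp.toLp_add, inner_toLp_toLp,
      ← integral_weightedDivergence_eq_zero hV (X := fun x => (χ x * (χ x * w x)) • X x)
        ((hχ.mul (hχ.mul hw)).smul hX) hχc.mul_right.smul_right]
    refine integral_congr_ae (ae_of_all _ fun x => ?_)
    have hχ' := (hχ.differentiable one_ne_zero x)
    have hw' := (hw.differentiable one_ne_zero x)
    rw [weightedDivergence_smul (hχ'.fun_mul (hχ'.fun_mul hw')) (hX.differentiable one_ne_zero x),
      hXV, fderiv_fun_mul hχ' (hχ'.fun_mul hw'), fderiv_fun_mul hχ' hw']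
    simp only [Pi.add_apply, Pi.smul_apply, ← smul_add, add_sub_cancel, inner_add_right,
      inner_smul_right, inner_gradient_right]
    simp
    ring
  have hle := norm_le_add_of_inner_add_add_eq_zero horth
  rw [norm_smul, Real.norm_two] at hle
  rw [← Lp.enorm_toLp hH, ← Lp.enorm_toLp hS, ← Lp.enorm_toLp hB]
  simp only [enorm_eq_nnnorm]
  exact_mod_cast hle

lemma enorm_integral_mul_weightedDivergence_le (hV : ContDiff ℝ 1 V) {w χ : E → ℝ}
    (hw : ContDiff ℝ 1 w) (hχ : ContDiff ℝ 1 χ) (hχc : HasCompactSupport χ) {Y : E → E}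
    (hY : ContDiff ℝ 1 Y) (hYc : HasCompactSupport Y) (hχY : ∀ x, χ x • Y x = Y x) :
    ‖∫ x, w x * weightedDivergence V Y x ∂gibbs V‖ₑ ≤
      eLpNorm (fun x => χ x • ∇ w x) 2 (gibbs V) * eLpNorm Y 2 (gibbs V) := by
  have := isLocallyFiniteMeasure_gibbs hV.continuous
  have hDw : Continuous (∇ w) := (contDiff_gradient (n := 0) hw).continuous
  have hinner : ∫ x, w x * weightedDivergence V Y x ∂gibbs V =
      -∫ x, ⟪χ x • ∇ w x, Y x⟫ ∂gibbs V := by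
    rw [← neg_eq_iff_eq_neg, ← integral_fderiv_apply_gibbs hV hw hY hYc]
    refine integral_congr_ae (ae_of_all _ fun x => ?_)
    beta_reduce
    rw [real_inner_smul_left, ← real_inner_smul_right, hχY, inner_gradient_left]
  rw [hinner, enorm_neg]
  exact enorm_integral_inner_le ((hχ.continuous.smul hDw).memLp_of_hasCompactSupport
    hχc.smul_right) (hY.continuous.memLp_of_hasCompactSupport hYc)

end Caccioppoli

section WeaklyHarmonic

variable [FiniteDimensional ℝ E] {V : E → ℝ}

lemma weightedDivergence_exp_smul {X : E → E} {x : E} (hV : DifferentiableAt ℝ V x)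
    (hX : DifferentiableAt ℝ X x) :
    weightedDivergence V (fun y => exp (V y) • X y) x = exp (V x) * divergence X x := by
  rw [weightedDivergence_smul hV.exp hX, hV.hasFDerivAt.exp.fderiv, weightedDivergence]
  simp
  ring

lemma gradient_exp_mul {q : E → ℝ} {x : E} (hV : DifferentiableAt ℝ V x)
    (hq : DifferentiableAt ℝ q x) :
    ∇ (fun y => exp (V y) * q y) x = exp (V x) • (∇ q x + q x • ∇ V x) := by
  rw [gradient, (hV.hasFDerivAt.exp.fun_mul hq.hasFDerivAt).fderiv]
  simp only [gradient, map_add, smul_add, map_smulₛₗ, smul_smul, conj_trivial, mul_comm (q x)]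

variable [MeasurableSpace E] [BorelSpace E]

lemma divergence_convolution_eq_zero (hV : ContDiff ℝ 1 V) {p : E → ℝ} (hp : LocallyIntegrable p)
    (hweak : ∀ u : E → ℝ, ContDiff ℝ ∞ u → HasCompactSupport u →
      ∫ x, p x * weightedDivergence V (∇ u) x = 0)
    {k : E → ℝ} (hk : ContDiff ℝ ∞ k) (hkc : HasCompactSupport k) (x : E) :
    divergence (∇ (k ⋆ p) + k ⋆ fun y => p y • ∇ V y) x = 0 := by
  have hDV : Continuous (∇ V) := (contDiff_gradient (n := 0) hV).continuous
  rw [divergence_gradient_convolution_add (contDiff_infty.1 hk 2) hkc hp (hp.smul_continuous hDV),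
    ← hweak (fun z => k (x - z)) (hk.comp (contDiff_const.sub contDiff_id))
      (hkc.comp_homeomorph (Homeomorph.subLeft x))]
  refine integral_congr_ae (ae_of_all _ fun y => ?_)
  beta_reduce
  rw [weightedDivergence, map_smul, smul_eq_mul, mul_sub, ← inner_gradient_left,
    ← inner_gradient_left, real_inner_comm]

lemma enorm_integral_convolution_mul_weightedDivergence_le (hV : ContDiff ℝ 1 V) {p : E → ℝ}
    (hp : LocallyIntegrable p)
    (hweak : ∀ u : E → ℝ, ContDiff ℝ ∞ u → HasCompactSupport u →
      ∫ x, p x * weightedDivergence V (∇ u) x = 0)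
    {k : E → ℝ} (hk : ContDiff ℝ ∞ k) (hkc : HasCompactSupport k) {χ : E → ℝ}
    (hχ : ContDiff ℝ 1 χ) (hχc : HasCompactSupport χ) {Y : E → E}
    (hY : ContDiff ℝ 1 Y) (hYc : HasCompactSupport Y) (hχY : ∀ x, χ x • Y x = Y x) :
    let q := k ⋆ p
    let Q := k ⋆ fun y => p y • ∇ V y
    ‖∫ x, (exp (V x) * q x) * weightedDivergence V Y x ∂gibbs V‖ₑ ≤
      (eLpNorm (fun x => χ x • exp (V x) • (Q x - q x • ∇ V x)) 2 (gibbs V) +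
        2 * eLpNorm (fun x => (exp (V x) * q x) • ∇ χ x) 2 (gibbs V)) *
          eLpNorm Y 2 (gibbs V) := by
  intro q Q
  have hDV : Continuous (∇ V) := (contDiff_gradient (n := 0) hV).continuous
  have hq : ContDiff ℝ 2 q :=
    hkc.contDiff_convolution_left (n := 2) _ (hk.of_le (mod_cast le_top)) hp
  have hQ : ContDiff ℝ 1 Q :=
    hkc.contDiff_convolution_left (n := 1) _ (hk.of_le (mod_cast le_top)) (hp.smul_continuous hDV)
  have hG : ContDiff ℝ 1 (∇ q + Q) := (contDiff_gradient hq).add hQ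
  have hq1 : ContDiff ℝ 1 q := hq.of_le one_le_two
  have hw : ContDiff ℝ 1 fun x => exp (V x) * q x := hV.exp.mul hq1
  have hfree (x) : weightedDivergence V (fun y => exp (V y) • (∇ q + Q) y) x = 0 := by
    rw [weightedDivergence_exp_smul (hV.differentiable one_ne_zero x)
      (hG.differentiable one_ne_zero x), divergence_convolution_eq_zero hV hp hweak hk hkc,
      mul_zero]
  have hdiff (x) : exp (V x) • (∇ q + Q) x - ∇ (fun y => exp (V y) * q y) x =
      exp (V x) • (Q x - q x • ∇ V x) := by
    rw [gradient_exp_mul (hV.differentiable one_ne_zero x) (hq1.differentiable one_ne_zero x),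
      ← smul_sub, Pi.add_apply, add_sub_add_left_eq_sub]
  have hCaccioppoli := eLpNorm_smul_gradient_le hV hw hχ hχc
    (X := fun x => exp (V x) • (∇ q + Q) x) (hV.exp.smul hG) hfree
  simp only [hdiff] at hCaccioppoli
  exact (enorm_integral_mul_weightedDivergence_le hV hw hχ hχc hY hYc hχY).trans (by gcongr)

end WeaklyHarmonic

section Approximation

lemma exists_contDiffBump_tendsto_rOut (G : Type*) [NormedAddCommGroup G] :
    ∃ φ : ℕ → ContDiffBump (0 : G), Tendsto (fun n => (φ n).rOut) atTop (𝓝 0) ∧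
      ∀ n, (φ n).rOut ≤ 2 * (φ n).rIn := by
  refine ⟨fun n => ⟨1 / ((n : ℝ) + 1), 2 * (1 / ((n : ℝ) + 1)), by positivity, ?_⟩, ?_, ?_⟩
  · exact lt_two_mul_self (by positivity)
  · simpa using tendsto_one_div_add_atTop_nhds_zero_nat.const_mul (2 : ℝ)
  · exact fun n => le_rfl

variable [FiniteDimensional ℝ E] [MeasurableSpace E] [BorelSpace E] {V : E → ℝ}

lemma memLp_restrict_smul_continuous {F : Type*} [NormedAddCommGroup F] [NormedSpace ℝ F]
    {μ : Measure E} {p : ℝ≥0∞} {K : Set E} (hK : IsCompact K) {f : E → ℝ}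
    (hf : MemLp f p (μ.restrict K)) {G : E → F} (hG : Continuous G) :
    MemLp (fun x => f x • G x) p (μ.restrict K) := by
  obtain ⟨C, hC⟩ := hK.exists_bound_of_continuousOn hG.continuousOn
  refine hf.of_le_mul (hf.1.smul hG.aestronglyMeasurable.restrict)
    (ae_restrict_of_forall_mem hK.measurableSet fun x hx => ?_) (c := C)
  rw [norm_smul, mul_comm]
  gcongr
  exact hC x hx

lemma memLp_restrict_of_memLp_gibbs (hV : Continuous V) {p : ℝ≥0∞} {w : E → ℝ}
    (hw : MemLp w p (gibbs V)) {K : Set E} (hK : IsCompact K) : MemLp w p (volume.restrict K) := by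
  obtain ⟨C, hC⟩ := exists_restrict_gibbs_le_smul_gibbs continuous_zero hV hK
  rw [gibbs_zero] at hC
  exact hw.of_measure_le_smul ENNReal.coe_ne_top hC

lemma locallyIntegrable_of_forall_memLp_restrict {F : Type*} [NormedAddCommGroup F]
    {f : E → F} {p : ℝ≥0∞} (hp : 1 ≤ p)
    (hf : ∀ K : Set E, IsCompact K → MemLp f p (volume.restrict K)) : LocallyIntegrable f :=
  locallyIntegrable_iff.2 fun K hK => by
    have := isFiniteMeasure_restrict.2 (hK.measure_ne_top (μ := volume))
    exact (hf K hK).integrable hp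

lemma aestronglyMeasurable_gibbs {F : Type*} [TopologicalSpace F] {f : E → F}
    (hf : AEStronglyMeasurable f) : AEStronglyMeasurable f (gibbs V) :=
  hf.mono_ac (withDensity_absolutelyContinuous _ _)

lemma tendsto_eLpNorm_convolution_smul_sub (hV : ContDiff ℝ 1 V) {χ : E → ℝ}
    (hχ : Continuous χ) (hχc : HasCompactSupport χ) {p : E → ℝ}
    (hp : ∀ K : Set E, IsCompact K → MemLp p 2 (volume.restrict K))
    {φ : ℕ → ContDiffBump (0 : E)} (hφ : Tendsto (fun n => (φ n).rOut) atTop (𝓝 0)) :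
    Tendsto (fun n => eLpNorm (fun x => χ x • exp (V x) •
      (((φ n).normed volume ⋆ fun y => p y • ∇ V y) x -
        ((φ n).normed volume ⋆ p) x • ∇ V x)) 2 (gibbs V)) atTop (𝓝 0) := by
  have hDV : Continuous (∇ V) := (contDiff_gradient (n := 0) hV).continuous
  let a : E → ℝ := fun x => χ x * exp (V x)
  have ha : Continuous a := hχ.mul hV.continuous.rexp
  have hac : HasCompactSupport a := hχc.mul_right
  have hp1 := locallyIntegrable_of_forall_memLp_restrict one_le_two hp
  have hF1 := hp1.smul_continuous hDV
  have hF (K : Set E) (hK : IsCompact K) := memLp_restrict_smul_continuous hK (hp K hK) hDV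
  have hlimF := tendsto_eLpNorm_gibbs_of_norm_le_mul_convolution_sub hV.continuous ha.abs hac.abs
    one_le_two ENNReal.ofNat_ne_top hF hφ (g := fun n x => a x •
      (((φ n).normed volume ⋆ fun y => p y • ∇ V y) - fun y => p y • ∇ V y) x)
    fun n x => (norm_smul _ _).le
  have hlimp := tendsto_eLpNorm_gibbs_of_norm_le_mul_convolution_sub hV.continuous
    (ha.norm.mul hDV.norm) hac.norm.mul_right
    one_le_two ENNReal.ofNat_ne_top hp hφ (g := fun n x => a x •
      ((φ n).normed volume ⋆ p - p) x • ∇ V x)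
    fun n x => le_of_eq (by simp only [norm_smul, Pi.mul_apply]; ring)
  refine tendsto_of_tendsto_of_tendsto_of_le_of_le tendsto_const_nhds
    (by simpa using hlimF.add hlimp) (fun _ => zero_le) fun n => ?_
  have hk := (φ n).continuous_normed (μ := volume)
  have hkc := (φ n).hasCompactSupport_normed (μ := volume)
  refine le_trans (eLpNorm_congr_ae (ae_of_all _ fun x => ?_)).le (eLpNorm_sub_le
    (aestronglyMeasurable_gibbs <| ha.aestronglyMeasurable.smul <|
      (hkc.continuous_convolution_left _ hk hF1).aestronglyMeasurable.sub
      hF1.aestronglyMeasurable)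
    (aestronglyMeasurable_gibbs <| ha.aestronglyMeasurable.smul <|
      ((hkc.continuous_convolution_left _ hk hp1).aestronglyMeasurable.sub
      hp1.aestronglyMeasurable).smul hDV.aestronglyMeasurable) one_le_two)
  simp only [a, Pi.sub_apply, mul_smul, sub_smul, smul_sub]
  abel

lemma exp_mul_exp_neg_mul (a b : ℝ) : exp a * (exp (-a) * b) = b := by
  rw [exp_neg, mul_inv_cancel_left₀ (exp_pos a).ne']

lemma tendsto_eLpNorm_exp_mul_convolution_sub_smul (hV : Continuous V) {F : Type*}
    [NormedAddCommGroup F] [NormedSpace ℝ F] {a : E → F} (ha : Continuous a)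
    (hac : HasCompactSupport a) {p : ℝ≥0∞} (hp : 1 ≤ p) (hp_top : p ≠ ⊤) {w : E → ℝ}
    (hw : ∀ K : Set E, IsCompact K → MemLp (fun x => exp (-V x) * w x) p (volume.restrict K))
    {φ : ℕ → ContDiffBump (0 : E)} (hφ : Tendsto (fun n => (φ n).rOut) atTop (𝓝 0)) :
    Tendsto (fun n => eLpNorm (fun x =>
      (exp (V x) * ((φ n).normed volume ⋆ fun y => exp (-V y) * w y) x - w x) • a x) p (gibbs V))
      atTop (𝓝 0) := by
  refine tendsto_eLpNorm_gibbs_of_norm_le_mul_convolution_sub hV (hV.rexp.mul ha.norm)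
    hac.norm.mul_left hp hp_top hw hφ fun n x => le_of_eq ?_
  nth_rewrite 1 [← exp_mul_exp_neg_mul (V x) (w x)]
  rw [← mul_sub, norm_smul, norm_mul, Real.norm_of_nonneg (exp_pos _).le]
  simp only [Pi.mul_apply, Pi.sub_apply]
  ring

lemma tendsto_integral_exp_mul_convolution_mul (hV : Continuous V) {a : E → ℝ}
    (ha : Continuous a) (hac : HasCompactSupport a) {w : E → ℝ}
    (hw : LocallyIntegrable fun x => exp (-V x) * w x)
    {φ : ℕ → ContDiffBump (0 : E)} (hφ : Tendsto (fun n => (φ n).rOut) atTop (𝓝 0)) :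
    Tendsto (fun n =>
      ∫ x, (exp (V x) * ((φ n).normed volume ⋆ fun y => exp (-V y) * w y) x) * a x ∂gibbs V)
      atTop (𝓝 (∫ x, w x * a x ∂gibbs V)) := by
  have := isLocallyFiniteMeasure_gibbs hV
  have hlim := tendsto_eLpNorm_exp_mul_convolution_sub_smul hV ha hac le_rfl ENNReal.one_ne_top
    (fun K hK => memLp_one_iff_integrable.2 (hw.integrableOn_isCompact hK)) hφ
  have hint (n) : Integrable (fun x =>
      (exp (V x) * ((φ n).normed volume ⋆ fun y => exp (-V y) * w y) x) * a x) (gibbs V) :=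
    ((hV.rexp.mul ((φ n).hasCompactSupport_normed.continuous_convolution_left _
      (φ n).continuous_normed hw)).mul ha).integrable_of_hasCompactSupport hac.mul_left
  have hwa : AEStronglyMeasurable (fun x => w x * a x) (gibbs V) := by
    refine aestronglyMeasurable_gibbs (AEStronglyMeasurable.mul ?_ ha.aestronglyMeasurable)
    rw [← funext fun x => exp_mul_exp_neg_mul (V x) (w x)]
    exact hV.rexp.aestronglyMeasurable.mul hw.aestronglyMeasurable
  refine tendsto_integral_of_L1' _ hwa (Eventually.of_forall hint) ?_
  refine hlim.congr fun n => eLpNorm_congr_ae (ae_of_all _ fun x => ?_)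
  exact sub_mul _ _ _

/-- `L w = 0` in the sense of distributions, where `L u = weightedDivergence V (∇ u)` is the
generator of the Langevin diffusion, tested against `gibbs V`. -/
def IsWeaklyHarmonic (V w : E → ℝ) : Prop :=
  ∀ u : E → ℝ, ContDiff ℝ ∞ u → HasCompactSupport u →
    ∫ x, w x * weightedDivergence V (∇ u) x ∂gibbs V = 0

lemma IsWeaklyHarmonic.enorm_integral_mul_weightedDivergence_le (hV : ContDiff ℝ 1 V)
    {w : E → ℝ} (hw : MemLp w 2 (gibbs V)) (hharm : IsWeaklyHarmonic V w) {χ : E → ℝ}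
    (hχ : ContDiff ℝ 1 χ) (hχc : HasCompactSupport χ) {Y : E → E}
    (hY : ContDiff ℝ 1 Y) (hYc : HasCompactSupport Y) (hχY : ∀ x, χ x • Y x = Y x) :
    ‖∫ x, w x * weightedDivergence V Y x ∂gibbs V‖ₑ ≤
      2 * eLpNorm (fun x => w x • ∇ χ x) 2 (gibbs V) * eLpNorm Y 2 (gibbs V) := by
  have := isLocallyFiniteMeasure_gibbs hV.continuous
  obtain ⟨φ, hφ, -⟩ := exists_contDiffBump_tendsto_rOut E
  let p : E → ℝ := fun x => exp (-V x) * w x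
  have hp2 (K : Set E) (hK : IsCompact K) : MemLp p 2 (volume.restrict K) := by
    simpa only [p, smul_eq_mul, mul_comm] using memLp_restrict_smul_continuous hK
      (memLp_restrict_of_memLp_gibbs hV.continuous hw hK) hV.continuous.fun_neg.rexp
  have hp : LocallyIntegrable p := locallyIntegrable_of_forall_memLp_restrict one_le_two hp2
  have hweak (u : E → ℝ) (hu : ContDiff ℝ ∞ u) (huc : HasCompactSupport u) :
      ∫ x, p x * weightedDivergence V (∇ u) x = 0 := by
    simpa only [integral_gibbs hV.continuous, smul_eq_mul, ← mul_assoc] using hharm u hu huc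
  have hDχ : Continuous (∇ χ) := (contDiff_gradient (n := 0) hχ).continuous
  have hδ : Continuous (weightedDivergence V Y) :=
    (contDiff_weightedDivergence (n := 0) hV hY).continuous
  have hw' (n) : Continuous fun x => exp (V x) * ((φ n).normed volume ⋆ p) x :=
    hV.continuous.rexp.mul ((φ n).hasCompactSupport_normed.continuous_convolution_left _
      (φ n).continuous_normed hp)
  have hlimS := tendsto_eLpNorm_convolution_smul_sub hV hχ.continuous hχc hp2 hφ
  have hlimB := tendsto_eLpNorm_exp_mul_convolution_sub_smul hV.continuous hDχ
    (hasCompactSupport_gradient hχc) one_le_two ENNReal.ofNat_ne_top hp2 hφ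
  have hlimI := tendsto_integral_exp_mul_convolution_mul hV.continuous hδ
    (hasCompactSupport_weightedDivergence hYc) hp hφ
  have hlim := ENNReal.Tendsto.mul_const (b := eLpNorm Y 2 (gibbs V))
    (hlimS.add (ENNReal.Tendsto.const_mul (a := 2)
      (hlimB.add_const (eLpNorm (fun x => w x • ∇ χ x) 2 (gibbs V)))
      (Or.inr ENNReal.ofNat_ne_top)))
    (Or.inr (hY.continuous.memLp_of_hasCompactSupport hYc).eLpNorm_ne_top)
  simp only [zero_add] at hlim
  refine le_of_tendsto_of_tendsto' hlimI.enorm hlim fun n => ?_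
  refine (enorm_integral_convolution_mul_weightedDivergence_le hV hp hweak
    (φ n).contDiff_normed (φ n).hasCompactSupport_normed hχ hχc hY hYc hχY).trans ?_
  gcongr
  refine (eLpNorm_congr_ae (ae_of_all _ fun x => ?_)).trans_le (eLpNorm_add_le
    (((hw' n).aestronglyMeasurable.sub hw.1).smul hDχ.aestronglyMeasurable)
    (hw.1.smul hDχ.aestronglyMeasurable) one_le_two)
  simp only [p, Pi.add_apply, sub_smul, sub_add_cancel]

end Approximation

section Liouville

lemma exists_contDiff_eqOn_one_norm_fderiv_le [FiniteDimensional ℝ E] {K : Set E}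
    (hK : IsCompact K) {δ : ℝ} (hδ : 0 < δ) :
    ∃ χ : E → ℝ, ContDiff ℝ ∞ χ ∧ HasCompactSupport χ ∧ EqOn χ 1 K ∧
      ∀ x, ‖fderiv ℝ χ x‖ ≤ δ := by
  let ψ : ContDiffBump (0 : E) := ⟨1, 2, one_pos, one_lt_two⟩
  obtain ⟨C, hC⟩ := (ψ.contDiff (n := 1)).continuous_fderiv one_ne_zero
    |>.bounded_above_of_compact_support (ψ.hasCompactSupport.fderiv ℝ)
  have hC0 : 0 ≤ C := (norm_nonneg _).trans (hC 0)
  obtain ⟨R, hR, hKR⟩ := hK.isBounded.subset_closedBall_lt 0 0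
  let s := min R⁻¹ (δ / (C + 1))
  have hs : 0 < s := lt_min (inv_pos.2 hR) (by positivity)
  refine ⟨fun x => ψ (s • x), ψ.contDiff.comp (contDiff_const_smul s),
    ψ.hasCompactSupport.comp_homeomorph (Homeomorph.smulOfNeZero s hs.ne'), fun x hx => ?_,
    fun x => ?_⟩
  · refine ψ.one_of_mem_closedBall (mem_closedBall_zero_iff.2 ?_)
    calc ‖s • x‖ = s * ‖x‖ := by rw [norm_smul, Real.norm_of_nonneg hs.le]
      _ ≤ R⁻¹ * R := by
        gcongr
        · exact min_le_left _ _
        · exact mem_closedBall_zero_iff.1 (hKR hx)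
      _ = 1 := inv_mul_cancel₀ hR.ne'
  · rw [fderiv_comp_smul]
    calc ‖s • fderiv ℝ ψ (s • x)‖ = s * ‖fderiv ℝ ψ (s • x)‖ := by
          rw [norm_smul, Real.norm_of_nonneg hs.le]
      _ ≤ δ / (C + 1) * (C + 1) := by
        gcongr
        · exact min_le_right _ _
        · exact (hC _).trans (le_add_of_nonneg_right zero_le_one)
      _ = δ := div_mul_cancel₀ _ (by positivity)

variable [FiniteDimensional ℝ E] [MeasurableSpace E] [BorelSpace E]

lemma IsWeaklyHarmonic.integral_mul_weightedDivergence_eq_zero {V w : E → ℝ}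
    (hV : ContDiff ℝ 1 V) (hw : MemLp w 2 (gibbs V)) (hharm : IsWeaklyHarmonic V w) {Y : E → E}
    (hY : ContDiff ℝ 1 Y) (hYc : HasCompactSupport Y) :
    ∫ x, w x * weightedDivergence V Y x ∂gibbs V = 0 := by
  have := isLocallyFiniteMeasure_gibbs hV.continuous
  have hYtop : eLpNorm Y 2 (gibbs V) ≠ ⊤ :=
    (hY.continuous.memLp_of_hasCompactSupport hYc).eLpNorm_ne_top
  have hbound (δ : ℝ) (hδ : 0 < δ) : ‖∫ x, w x * weightedDivergence V Y x ∂gibbs V‖ₑ ≤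
      2 * (ENNReal.ofReal δ * eLpNorm w 2 (gibbs V)) * eLpNorm Y 2 (gibbs V) := by
    obtain ⟨χ, hχ, hχc, hχ1, hχδ⟩ := exists_contDiff_eqOn_one_norm_fderiv_le hYc.isCompact hδ
    refine (hharm.enorm_integral_mul_weightedDivergence_le hV hw (hχ.of_le (mod_cast le_top)) hχc
      hY hYc fun x => ?_).trans ?_
    · by_cases hx : x ∈ tsupport Y
      · rw [hχ1 hx, Pi.one_apply, one_smul]
      · rw [image_eq_zero_of_notMem_tsupport hx, smul_zero]
    · gcongr
      refine eLpNorm_le_mul_eLpNorm_of_ae_le_mul (ae_of_all _ fun x => ?_) 2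
      rw [norm_smul, gradient, LinearIsometryEquiv.norm_map, mul_comm]
      gcongr
      exact hχδ x
  have hlim : Tendsto (fun δ => 2 * (ENNReal.ofReal δ * eLpNorm w 2 (gibbs V)) *
      eLpNorm Y 2 (gibbs V)) (𝓝[>] 0) (𝓝 0) := by
    have h := ENNReal.Tendsto.mul_const (ENNReal.Tendsto.const_mul (a := 2)
      (ENNReal.Tendsto.mul_const (ENNReal.tendsto_ofReal (tendsto_id (x := 𝓝 (0 : ℝ))))
      (Or.inr hw.eLpNorm_ne_top)) (Or.inr ENNReal.ofNat_ne_top)) (Or.inr hYtop)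
    simpa using h.mono_left nhdsWithin_le_nhds
  exact enorm_eq_zero.1 <| le_antisymm
    (ge_of_tendsto hlim (eventually_mem_nhdsWithin.mono hbound)) zero_le

lemma exists_ae_eq_const_of_forall_integral_mul_fderiv_eq_zero {w : E → ℝ}
    (hw : LocallyIntegrable w) (hzero : ∀ ψ : E → ℝ, ContDiff ℝ ∞ ψ → HasCompactSupport ψ →
      ∀ v, ∫ x, w x * fderiv ℝ ψ x v = 0) :
    ∃ a, w =ᵐ[volume] const E a := by
  obtain ⟨φ, hφ, hφratio⟩ := exists_contDiffBump_tendsto_rOut E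
  let q (n : ℕ) := (φ n).normed volume ⋆ w
  have hconst (n) (x y : E) : q n x = q n y := by
    have hk : ContDiff ℝ ∞ ((φ n).normed volume) := (φ n).contDiff_normed
    have hkc := (φ n).hasCompactSupport_normed (μ := volume)
    have hk1 : ContDiff ℝ 1 ((φ n).normed volume) := hk.of_le (mod_cast le_top)
    have hderiv (x) := hkc.hasFDerivAt_convolution_left (lsmul ℝ ℝ) hk1 hw x
    refine is_const_of_fderiv_eq_zero (𝕜 := ℝ) (fun x => (hderiv x).differentiableAt)
      (fun x => ContinuousLinearMap.ext fun v => ?_) x y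
    have hint := (hkc.fderiv ℝ).convolutionExists_left
      ((lsmul ℝ ℝ).precompL E) (hk1.continuous_fderiv one_ne_zero) hw x
    have hreflect := hzero (fun z => (φ n).normed volume (x - z))
      (hk.comp (contDiff_const.sub contDiff_id))
      (hkc.comp_homeomorph (Homeomorph.subLeft x)) v
    simp only [fderiv_comp_const_sub (hk1.differentiable one_ne_zero),
      neg_apply, mul_neg, integral_neg, neg_eq_zero] at hreflect
    rw [(hderiv x).fderiv, convolution_def, ContinuousLinearMap.integral_apply hint,
      ← integral_sub_left_eq_self _ volume x]
    simpa [ContinuousLinearMap.precompL_apply, mul_comm] using hreflect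
  have hae := ContDiffBump.ae_convolution_tendsto_right_of_locallyIntegrable hφ
    (Eventually.of_forall hφratio) hw
  obtain ⟨x₀, hx₀⟩ := hae.exists
  refine ⟨w x₀, hae.mono fun x hx => tendsto_nhds_unique hx (hx₀.congr fun n => hconst n _ _)⟩

theorem IsWeaklyHarmonic.exists_ae_eq_const {V w : E → ℝ} (hV : ContDiff ℝ 1 V)
    (hw : MemLp w 2 (gibbs V)) (hharm : IsWeaklyHarmonic V w) :
    ∃ a, w =ᵐ[gibbs V] const E a := by
  have hloc : LocallyIntegrable w := locallyIntegrable_of_forall_memLp_restrict one_le_two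
    fun K hK => memLp_restrict_of_memLp_gibbs hV.continuous hw hK
  suffices hzero : ∀ ψ : E → ℝ, ContDiff ℝ ∞ ψ → HasCompactSupport ψ →
      ∀ v, ∫ x, w x * fderiv ℝ ψ x v = 0 by
    obtain ⟨a, ha⟩ := exists_ae_eq_const_of_forall_integral_mul_fderiv_eq_zero hloc hzero
    exact ⟨a, (withDensity_absolutelyContinuous _ _).ae_le ha⟩
  intro ψ hψ hψc v
  have hψ1 : ContDiff ℝ 1 ψ := hψ.of_le (mod_cast le_top)
  have hψv : ContDiff ℝ 1 fun y => ψ y • v := hψ1.smul contDiff_const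
  have hdiv (x) : weightedDivergence V (fun y => exp (V y) • ψ y • v) x =
      exp (V x) * fderiv ℝ ψ x v := by
    rw [weightedDivergence_exp_smul (hV.differentiable one_ne_zero x)
      (hψv.differentiable one_ne_zero x), divergence_smul (hψ1.differentiable one_ne_zero x)
      (differentiableAt_const v)]
    simp [divergence]
  rw [← hharm.integral_mul_weightedDivergence_eq_zero hV hw
    (Y := fun y => exp (V y) • ψ y • v) (hV.exp.smul hψv)
    hψc.smul_right.smul_left, integral_gibbs hV.continuous]
  refine integral_congr_ae (ae_of_all _ fun x => ?_)
  beta_reduce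
  rw [hdiv, exp_neg, smul_eq_mul]
  field_simp

end Liouville

section Poincare

lemma norm_toLp_sq {Ω : Type*} [MeasurableSpace Ω] {μ : Measure Ω} {f : Ω → E}
    (hf : MemLp f 2 μ) : ‖hf.toLp‖ ^ 2 = ∫ x, ‖f x‖ ^ 2 ∂μ := by
  rw [← real_inner_self_eq_norm_sq, inner_toLp_toLp]
  simp only [real_inner_self_eq_norm_sq]

variable [FiniteDimensional ℝ E] {V : E → ℝ}

lemma weightedDivergence_gradient_add {u v : E → ℝ} (hu : ContDiff ℝ 2 u) (hv : ContDiff ℝ 2 v) :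
    weightedDivergence V (∇ (u + v)) =
      weightedDivergence V (∇ u) + weightedDivergence V (∇ v) := by
  have hgrad : ∇ (u + v) = ∇ u + ∇ v :=
    funext fun x => gradient_add (hu.differentiable two_ne_zero x) (hv.differentiable two_ne_zero x)
  funext x
  simp only [weightedDivergence, hgrad, Pi.add_apply, map_add,
    divergence_add ((contDiff_gradient hu).differentiable one_ne_zero x)
      ((contDiff_gradient hv).differentiable one_ne_zero x)]
  ring

lemma weightedDivergence_gradient_const_smul (a : ℝ) {u : E → ℝ} (hu : ContDiff ℝ 2 u) :
    weightedDivergence V (∇ (a • u)) = a • weightedDivergence V (∇ u) := by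
  funext x
  rw [funext (gradient_const_smul a u), weightedDivergence_smul (differentiableAt_const a)
    ((contDiff_gradient hu).differentiable one_ne_zero x)]
  simp

variable [MeasurableSpace E] [BorelSpace E]

/-- The image of the smooth compactly supported functions under the generator
`u ↦ weightedDivergence V (∇ u)`, as a subspace of `L²(gibbs V)`. -/
def generatorRange (V : E → ℝ) : Submodule ℝ (Lp ℝ 2 (gibbs V)) where
  carrier := {f | ∃ u : E → ℝ, ContDiff ℝ ∞ u ∧ HasCompactSupport u ∧
    f =ᵐ[gibbs V] weightedDivergence V (∇ u)}
  zero_mem' := by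
    refine ⟨0, contDiff_const, HasCompactSupport.zero, (Lp.coeFn_zero ℝ 2 _).trans ?_⟩
    simpa only [zero_smul] using (weightedDivergence_gradient_const_smul (V := V) (0 : ℝ)
      (contDiff_const (c := (0 : ℝ)))).symm.eventuallyEq
  add_mem' := by
    rintro f₁ f₂ ⟨u₁, hu₁, huc₁, hf₁⟩ ⟨u₂, hu₂, huc₂, hf₂⟩
    refine ⟨u₁ + u₂, hu₁.add hu₂, huc₁.add huc₂, (Lp.coeFn_add f₁ f₂).trans ?_⟩
    rw [weightedDivergence_gradient_add (contDiff_infty.1 hu₁ 2) (contDiff_infty.1 hu₂ 2)]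
    exact hf₁.add hf₂
  smul_mem' := by
    rintro a f ⟨u, hu, huc, hf⟩
    refine ⟨a • u, contDiff_const.smul hu, huc.smul_left, (Lp.coeFn_smul a f).trans ?_⟩
    rw [weightedDivergence_gradient_const_smul a (contDiff_infty.1 hu 2)]
    exact hf.const_smul a

lemma memLp_weightedDivergence (hV : ContDiff ℝ 1 V) {X : E → E} (hX : ContDiff ℝ 1 X)
    (hXc : HasCompactSupport X) : MemLp (weightedDivergence V X) 2 (gibbs V) :=
  have := isLocallyFiniteMeasure_gibbs hV.continuous
  (contDiff_weightedDivergence (n := 0) hV hX).continuous.memLp_of_hasCompactSupport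
    (hasCompactSupport_weightedDivergence hXc)

lemma isWeaklyHarmonic_of_mem_orthogonal_generatorRange (hV : ContDiff ℝ 1 V)
    {w : Lp ℝ 2 (gibbs V)} (hw : w ∈ (generatorRange V)ᗮ) : IsWeaklyHarmonic V w := by
  intro u hu huc
  have hLu := memLp_weightedDivergence hV (contDiff_gradient (contDiff_infty.1 hu 2))
    (hasCompactSupport_gradient huc)
  have horth := hw hLu.toLp ⟨u, hu, huc, hLu.coeFn_toLp⟩
  rw [L2.inner_def] at horth
  rw [← horth]
  refine integral_congr_ae ?_
  filter_upwards [hLu.coeFn_toLp] with x hx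
  simp [hx]

lemma mem_topologicalClosure_generatorRange (hV : ContDiff ℝ 1 V) {h : Lp ℝ 2 (gibbs V)}
    (hzero : ∫ x, h x ∂gibbs V = 0) : h ∈ (generatorRange V).topologicalClosure := by
  rw [← Submodule.orthogonal_orthogonal_eq_closure]
  intro w hw
  obtain ⟨a, ha⟩ := (isWeaklyHarmonic_of_mem_orthogonal_generatorRange hV hw).exists_ae_eq_const hV
    (Lp.memLp w)
  rw [L2.inner_def]
  calc ∫ x, ⟪w x, h x⟫ ∂gibbs V = ∫ x, a * h x ∂gibbs V :=
        integral_congr_ae (ha.mono fun x hx => by simp [hx, mul_comm])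
    _ = 0 := by rw [integral_const_mul, hzero, mul_zero]

lemma mul_inner_sq_le_of_mem_generatorRange (hV : ContDiff ℝ 1 V) {lam : ℝ} (hlam : 0 ≤ lam)
    (hgap : ∀ u : E → ℝ, ContDiff ℝ ∞ u → HasCompactSupport u →
      lam * ∫ x, ‖∇ u x‖ ^ 2 ∂gibbs V ≤ ∫ x, weightedDivergence V (∇ u) x ^ 2 ∂gibbs V)
    {g : E → ℝ} (hg : ContDiff ℝ 1 g) (hgc : HasCompactSupport g) (hgL : MemLp g 2 (gibbs V))
    {f : Lp ℝ 2 (gibbs V)} (hf : f ∈ generatorRange V) :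
    lam * ⟪f, hgL.toLp⟫ ^ 2 ≤ ‖f‖ ^ 2 * ∫ x, ‖∇ g x‖ ^ 2 ∂gibbs V := by
  obtain ⟨u, hu, huc, hfu⟩ := hf
  have := isLocallyFiniteMeasure_gibbs hV.continuous
  have hmemLp_gradient {v : E → ℝ} (hv : ContDiff ℝ 1 v) (hvc : HasCompactSupport v) :
      MemLp (∇ v) 2 (gibbs V) :=
    (contDiff_gradient (n := 0) hv).continuous.memLp_of_hasCompactSupport
      (hasCompactSupport_gradient hvc)
  have hu' := hmemLp_gradient (contDiff_infty.1 hu 1) huc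
  have hg' := hmemLp_gradient hg hgc
  have hX : ContDiff ℝ 1 (∇ u) := contDiff_gradient (contDiff_infty.1 hu 2)
  have hLu := memLp_weightedDivergence hV hX (hasCompactSupport_gradient huc)
  obtain rfl : f = hLu.toLp := Lp.ext (hfu.trans hLu.coeFn_toLp.symm)
  have hIBP : ⟪hLu.toLp, hgL.toLp⟫ = -⟪hg'.toLp, hu'.toLp⟫ := by
    simp only [inner_toLp_toLp, inner_gradient_left]
    rw [integral_fderiv_apply_gibbs hV hg hX (hasCompactSupport_gradient huc), neg_neg]
    rfl
  have hcauchySchwarz : ⟪hg'.toLp, hu'.toLp⟫ ^ 2 ≤ ‖hg'.toLp‖ ^ 2 * ‖hu'.toLp‖ ^ 2 := by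
    rw [← mul_pow]
    exact sq_le_sq' (neg_le_of_abs_le (abs_real_inner_le_norm _ _)) (real_inner_le_norm _ _)
  calc lam * ⟪hLu.toLp, hgL.toLp⟫ ^ 2
      ≤ lam * ‖hu'.toLp‖ ^ 2 * ‖hg'.toLp‖ ^ 2 := by
        rw [hIBP, neg_sq]
        nlinarith only [hcauchySchwarz, hlam]
    _ ≤ ‖hLu.toLp‖ ^ 2 * ‖hg'.toLp‖ ^ 2 := by
        gcongr
        simpa only [norm_toLp_sq, Real.norm_eq_abs, sq_abs] using hgap u hu huc
    _ = ‖hLu.toLp‖ ^ 2 * ∫ x, ‖∇ g x‖ ^ 2 ∂gibbs V := by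
        rw [norm_toLp_sq hg']

theorem mul_variance_le_of_forall_mul_le_integral_weightedDivergence_sq (hV : ContDiff ℝ 1 V)
    [IsProbabilityMeasure (gibbs V)] {lam : ℝ} (hlam : 0 ≤ lam)
    (hgap : ∀ u : E → ℝ, ContDiff ℝ ∞ u → HasCompactSupport u →
      lam * ∫ x, ‖∇ u x‖ ^ 2 ∂gibbs V ≤ ∫ x, weightedDivergence V (∇ u) x ^ 2 ∂gibbs V)
    {g : E → ℝ} (hg : ContDiff ℝ 1 g) (hgc : HasCompactSupport g) :
    lam * ProbabilityTheory.variance g (gibbs V) ≤ ∫ x, ‖∇ g x‖ ^ 2 ∂gibbs V := by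
  have hgL : MemLp g 2 (gibbs V) := hg.continuous.memLp_of_hasCompactSupport hgc
  have hcenter := hgL.sub (memLp_const (∫ x, g x ∂gibbs V))
  have hmean : ∫ x, (g x - ∫ y, g y ∂gibbs V) ∂gibbs V = 0 := by
    rw [integral_sub (hgL.integrable one_le_two) (integrable_const _)]
    simp
  have hmem : hcenter.toLp ∈ (generatorRange V).topologicalClosure :=
    mem_topologicalClosure_generatorRange hV ((integral_congr_ae hcenter.coeFn_toLp).trans hmean)
  have hclosure : lam * ⟪hcenter.toLp, hgL.toLp⟫ ^ 2 ≤
      ‖hcenter.toLp‖ ^ 2 * ∫ x, ‖∇ g x‖ ^ 2 ∂gibbs V :=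
    (isClosed_le (f := fun f : Lp ℝ 2 (gibbs V) => lam * ⟪f, hgL.toLp⟫ ^ 2)
      (g := fun f => ‖f‖ ^ 2 * ∫ x, ‖∇ g x‖ ^ 2 ∂gibbs V) (by fun_prop) (by fun_prop)
      ).closure_subset_iff.2 (fun f hf =>
        mul_inner_sq_le_of_mem_generatorRange hV hlam hgap hg hgc hgL hf) hmem
  have hnorm : ‖hcenter.toLp‖ ^ 2 = ProbabilityTheory.variance g (gibbs V) := by
    rw [norm_toLp_sq, ProbabilityTheory.variance_eq_integral hgL.aemeasurable]
    simp
  have hinner : ⟪hcenter.toLp, hgL.toLp⟫ = ProbabilityTheory.variance g (gibbs V) := by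
    have hconst : ⟪hcenter.toLp, (memLp_const (∫ x, g x ∂gibbs V)).toLp⟫ = 0 := by
      rw [inner_toLp_toLp]
      simp [integral_const_mul, hmean]
    rw [← hnorm, ← real_inner_self_eq_norm_sq,
      MemLp.toLp_sub hgL (memLp_const (∫ x, g x ∂gibbs V)), inner_sub_right, ← MemLp.toLp_sub,
      hconst, sub_zero]
  rw [hinner, hnorm] at hclosure
  rcases (ProbabilityTheory.variance_nonneg g (gibbs V)).eq_or_lt with hzero | hpos
  · rw [← hzero, mul_zero]
    exact integral_nonneg fun x => sq_nonneg _
  · nlinarith only [hclosure, hpos]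

end Poincare

section Transport

variable {Ω : Type*} {c : Ω → Ω → ℝ≥0∞} {ρ : Ω → ℝ}

lemma ofReal_abs_sub_le_costLipNorm_mul (hL : costLipNorm c ρ ≠ ⊤) {x y : Ω} (hxy : c x y ≠ ⊤) :
    ENNReal.ofReal |ρ x - ρ y| ≤ costLipNorm c ρ * c x y :=
  (ENNReal.div_le_iff_le_mul (.inr hL) (.inl hxy)).1 <|
    le_iSup₂_of_le (f := fun x y => ENNReal.ofReal |ρ x - ρ y| / c x y) x y le_rfl

variable [MeasurableSpace Ω] {μ ν : Measure Ω}

lemma integral_sub_integral_le_of_transportCost_lt (hc : Measurable (uncurry c))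
    (hL : costLipNorm c ρ ≠ ⊤) (hρμ : Integrable ρ μ) (hρν : Integrable ρ ν) {a : ℝ}
    (hT : transportCost c ν μ < ENNReal.ofReal a / costLipNorm c ρ) :
    ∫ x, ρ x ∂μ - ∫ x, ρ x ∂ν ≤ a := by
  simp only [transportCost, iInf_lt_iff] at hT
  obtain ⟨κ, ⟨rfl, rfl, -⟩, hκ⟩ := hT
  have ha : 0 < a := by
    by_contra! ha
    simp [ENNReal.ofReal_of_nonpos ha] at hκ
  have hfst : Integrable (fun p => ρ p.1) κ := hρν.comp_measurable measurable_fst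
  have hsnd : Integrable (fun p => ρ p.2) κ := hρμ.comp_measurable measurable_snd
  have hcost : ∀ᵐ p ∂κ, c p.1 p.2 < ⊤ := ae_lt_top hc hκ.ne_top
  have hle : ∫⁻ p, ‖ρ p.1 - ρ p.2‖ₑ ∂κ ≤ ENNReal.ofReal a := calc
    ∫⁻ p, ‖ρ p.1 - ρ p.2‖ₑ ∂κ ≤ ∫⁻ p, costLipNorm c ρ * c p.1 p.2 ∂κ :=
        lintegral_mono_ae <| hcost.mono fun p hp =>
          (Real.enorm_eq_ofReal_abs _).trans_le (ofReal_abs_sub_le_costLipNorm_mul hL hp.ne)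
    _ = costLipNorm c ρ * ∫⁻ p, c p.1 p.2 ∂κ := lintegral_const_mul _ hc
    _ ≤ ENNReal.ofReal a := by
        rw [mul_comm]
        exact ENNReal.mul_le_of_le_div hκ.le
  rw [integral_map measurable_fst.aemeasurable hρν.1,
    integral_map measurable_snd.aemeasurable hρμ.1, ← integral_sub hsnd hfst]
  calc ∫ p, (ρ p.2 - ρ p.1) ∂κ = -∫ p, (ρ p.1 - ρ p.2) ∂κ := by
        rw [← integral_neg]
        simp only [neg_sub]
    _ ≤ ‖∫ p, (ρ p.1 - ρ p.2) ∂κ‖ := neg_le_abs _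
    _ ≤ a := by
        rw [← toReal_enorm]
        exact ENNReal.toReal_le_of_le_ofReal ha.le
          ((enorm_integral_le_lintegral_enorm _).trans hle)

end Transport

section Schrodinger

variable [CompleteSpace E]

lemma gradient_sqrt_sq_div {q : E → ℝ} (hq0 : ∀ x, 0 ≤ q x) {Z : ℝ} (x : E) :
    ∇ (fun y => √(q y ^ 2 / Z)) x = (√Z)⁻¹ • ∇ q x := by
  rw [← gradient_const_smul]
  congr 1
  funext y
  rw [Real.sqrt_div (sq_nonneg _), Real.sqrt_sq (hq0 y), Pi.smul_apply, smul_eq_mul, div_eq_inv_mul]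

variable [MeasurableSpace E] {μ : Measure E} {ρ : E → ℝ}

/-- The transport–information inequality `α (T_c(ν, μ)) ≤ I(ν | μ)`, for all probability measures
`ν` with a positive `C¹` density with respect to `μ`. -/
def TransportInformation (c : E → E → ℝ≥0∞) (α : ℝ≥0∞ → ℝ≥0∞) (μ : Measure E) : Prop :=
  ∀ f : E → ℝ, (∀ x, 0 < f x) → ContDiff ℝ 1 f →
    IsProbabilityMeasure (μ.withDensity fun x => ENNReal.ofReal (f x)) →
    α (transportCost c (μ.withDensity fun x => ENNReal.ofReal (f x)) μ) ≤
      ∫⁻ x, ENNReal.ofReal (‖∇ (fun y => √(f y)) x‖ ^ 2) ∂μ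

/-- The Schrödinger form `q ↦ ∫ ‖∇ q‖² + ρ q² ∂μ` is bounded below by `lam` times the squared
`L²(μ)` norm, on the positive `C¹` functions for which all the integrals exist. -/
def SchrodingerBound (μ : Measure E) (ρ : E → ℝ) (lam : ℝ) : Prop :=
  ∀ q : E → ℝ, (∀ x, 0 < q x) → ContDiff ℝ 1 q → Integrable (fun x => q x ^ 2) μ →
    Integrable (fun x => ‖∇ q x‖ ^ 2) μ → Integrable (fun x => ρ x * q x ^ 2) μ →
    lam * ∫ x, q x ^ 2 ∂μ ≤ ∫ x, ‖∇ q x‖ ^ 2 ∂μ + ∫ x, ρ x * q x ^ 2 ∂μ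

-- Either `ν` is so close to `μ` that `∫ ρ ∂ν` is almost `∫ ρ ∂μ`, or its Fisher information is
-- large.
lemma TransportInformation.min_le_integral_add {c : E → E → ℝ≥0∞} {α : ℝ≥0∞ → ℝ≥0∞}
    (hTI : TransportInformation c α μ) (hα : Monotone α) (hc : Measurable (uncurry c))
    (hL : costLipNorm c ρ ≠ ⊤) (hρ : Integrable ρ μ) {ρ₀ : ℝ} (hρ₀ : ∀ x, ρ₀ ≤ ρ x)
    {a A : ℝ} (hA : ENNReal.ofReal A ≤ α (ENNReal.ofReal a / costLipNorm c ρ))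
    {f : E → ℝ} (hf0 : ∀ x, 0 < f x) (hf : ContDiff ℝ 1 f)
    [hν : IsProbabilityMeasure (μ.withDensity fun x => ENNReal.ofReal (f x))]
    (hI : Integrable (fun x => ‖∇ (fun y => √(f y)) x‖ ^ 2) μ)
    (hρν : Integrable ρ (μ.withDensity fun x => ENNReal.ofReal (f x))) :
    min (∫ x, ρ x ∂μ - a) (ρ₀ + A) ≤ ∫ x, ‖∇ (fun y => √(f y)) x‖ ^ 2 ∂μ +
      ∫ x, ρ x ∂μ.withDensity fun x => ENNReal.ofReal (f x) := by
  have hI0 : 0 ≤ ∫ x, ‖∇ (fun y => √(f y)) x‖ ^ 2 ∂μ := integral_nonneg fun x => sq_nonneg _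
  rcases lt_or_ge (transportCost c (μ.withDensity fun x => ENNReal.ofReal (f x)) μ)
    (ENNReal.ofReal a / costLipNorm c ρ) with hclose | hfar
  · have := integral_sub_integral_le_of_transportCost_lt hc hL hρ hρν hclose
    exact min_le_iff.2 (.inl (by linarith))
  · have hAI : A ≤ ∫ x, ‖∇ (fun y => √(f y)) x‖ ^ 2 ∂μ := by
      refine (ENNReal.ofReal_le_ofReal_iff hI0).1 ?_
      rw [ofReal_integral_eq_lintegral_ofReal hI (ae_of_all _ fun x => sq_nonneg _)]
      exact hA.trans ((hα hfar).trans (hTI f hf0 hf hν))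
    have hρ₀ν := integral_mono (integrable_const ρ₀) hρν hρ₀
    rw [integral_const, probReal_univ, one_smul] at hρ₀ν
    exact min_le_iff.2 (.inr (by linarith))

variable [BorelSpace E]

lemma TransportInformation.schrodingerBound {c : E → E → ℝ≥0∞} {α : ℝ≥0∞ → ℝ≥0∞}
    (hTI : TransportInformation c α μ) (hα : Monotone α) (hc : Measurable (uncurry c))
    (hL : costLipNorm c ρ ≠ ⊤) (hρ : Integrable ρ μ) {ρ₀ : ℝ} (hρ₀ : ∀ x, ρ₀ ≤ ρ x)
    {a A : ℝ} (hA : ENNReal.ofReal A ≤ α (ENNReal.ofReal a / costLipNorm c ρ)) :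
    SchrodingerBound μ ρ (min (∫ x, ρ x ∂μ - a) (ρ₀ + A)) := by
  intro q hq0 hq hq2 hgrad hρq
  rcases eq_or_ne μ 0 with rfl | hμ
  · simp
  set Z := ∫ x, q x ^ 2 ∂μ
  have hZ : 0 < Z := (integral_pos_iff_support_of_nonneg (fun x => sq_nonneg _) hq2).2 <| by
    have hsupp : support (fun x => q x ^ 2) = univ := eq_univ_of_forall fun x => by
      simp [(hq0 x).ne']
    rwa [hsupp, pos_iff_ne_zero, Measure.measure_univ_ne_zero]
  have hf0 (x) : 0 < q x ^ 2 / Z := div_pos (pow_pos (hq0 x) 2) hZ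
  have hfm : Measurable fun x => ENNReal.ofReal (q x ^ 2 / Z) := by
    have := hq.continuous.measurable
    fun_prop
  have hν : IsProbabilityMeasure (μ.withDensity fun x => ENNReal.ofReal (q x ^ 2 / Z)) := by
    refine ⟨?_⟩
    rw [withDensity_apply _ .univ, Measure.restrict_univ, ← ofReal_integral_eq_lintegral_ofReal
      (hq2.div_const Z) (ae_of_all _ fun x => (hf0 x).le), integral_div, div_self hZ.ne',
      ENNReal.ofReal_one]
  have hsq (x) : ‖∇ (fun y => √(q y ^ 2 / Z)) x‖ ^ 2 = ‖∇ q x‖ ^ 2 / Z := by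
    rw [gradient_sqrt_sq_div fun x => (hq0 x).le, norm_smul, mul_pow, norm_inv, inv_pow,
      Real.norm_eq_abs, sq_abs, Real.sq_sqrt hZ.le, div_eq_inv_mul]
  have hdensity (x) : (ENNReal.ofReal (q x ^ 2 / Z)).toReal • ρ x = ρ x * q x ^ 2 / Z := by
    rw [ENNReal.toReal_ofReal (hf0 x).le, smul_eq_mul, mul_comm, mul_div_assoc]
  have hmain := hTI.min_le_integral_add hα hc hL hρ hρ₀ hA hf0 ((hq.pow 2).div_const Z)
    (by simpa only [hsq] using hgrad.div_const Z)
    ((integrable_withDensity_iff_integrable_smul' hfm (by simp)).2 (by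
      simpa only [hdensity] using hρq.div_const Z))
  rw [integral_withDensity_eq_integral_toReal_smul hfm (by simp)] at hmain
  simp only [hsq, hdensity, integral_div, ← add_div] at hmain
  exact (le_div_iff₀ hZ).1 hmain

end Schrodinger

section Kato

lemma integrable_mul_norm_sq {Ω F : Type*} [TopologicalSpace Ω] [MeasurableSpace Ω]
    [OpensMeasurableSpace Ω] [NormedAddCommGroup F] {μ : Measure Ω} {ρ : Ω → ℝ}
    (hρ : Integrable ρ μ) {X : Ω → F} (hX : Continuous X) (hXc : HasCompactSupport X) :
    Integrable (fun x => ρ x * ‖X x‖ ^ 2) μ := by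
  obtain ⟨C, hC⟩ := (hX.norm.pow 2).bounded_above_of_compact_support
    (hXc.mono fun x hx h0 => hx (by simp [h0]))
  exact hρ.mul_bdd (hX.norm.pow 2).aestronglyMeasurable (ae_of_all _ hC)

lemma trace_comp_self_eq_sum_norm_sq {T : E →ₗ[ℝ] E} (hT : T.IsSymmetric) {ι : Type*} [Fintype ι]
    (b : OrthonormalBasis ι ℝ E) : LinearMap.trace ℝ E (T ∘ₗ T) = ∑ i, ‖T (b i)‖ ^ 2 := by
  rw [LinearMap.trace_eq_sum_inner _ b]
  exact Finset.sum_congr rfl fun i _ => by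
    rw [LinearMap.comp_apply, ← hT, real_inner_self_eq_norm_sq]

lemma norm_apply_sq_le_trace_mul_norm_sq [FiniteDimensional ℝ E] {T : E →ₗ[ℝ] E}
    (hT : T.IsSymmetric) (x : E) : ‖T x‖ ^ 2 ≤ LinearMap.trace ℝ E (T ∘ₗ T) * ‖x‖ ^ 2 := by
  let b := stdOrthonormalBasis ℝ E
  calc ‖T x‖ ^ 2 = ∑ i, ⟪T (b i), x⟫ ^ 2 := by
        simp only [← b.sum_sq_inner_right (T x), hT _ x]
    _ ≤ ∑ i, ‖T (b i)‖ ^ 2 * ‖x‖ ^ 2 := by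
        gcongr with i
        rw [← mul_pow]
        exact sq_le_sq' (neg_le_of_abs_le (abs_real_inner_le_norm _ _)) (real_inner_le_norm _ _)
    _ = LinearMap.trace ℝ E (T ∘ₗ T) * ‖x‖ ^ 2 := by
        rw [trace_comp_self_eq_sum_norm_sq hT b, Finset.sum_mul]

lemma gradient_sqrt_norm_sq_add [CompleteSpace E] {X : E → E} {x : E}
    (hX : DifferentiableAt ℝ X x) (hsymm : (fderiv ℝ X x : E →ₗ[ℝ] E).IsSymmetric) {δ : ℝ}
    (hδ : 0 < δ) :
    ∇ (fun y => √(‖X y‖ ^ 2 + δ)) x = (√(‖X x‖ ^ 2 + δ))⁻¹ • fderiv ℝ X x (X x) := by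
  refine ext_inner_right ℝ fun v => ?_
  have hderiv := (hX.hasFDerivAt.norm_sq.add_const δ).sqrt (by positivity)
  have hswap : ⟪fderiv ℝ X x (X x), v⟫ = ⟪X x, fderiv ℝ X x v⟫ := hsymm (X x) v
  rw [inner_gradient_left, hderiv.fderiv, real_inner_smul_left, hswap]
  simp
  ring

variable [FiniteDimensional ℝ E]

lemma norm_gradient_sqrt_norm_sq_add_sq_le {X : E → E} {x : E}
    (hX : DifferentiableAt ℝ X x) (hsymm : (fderiv ℝ X x : E →ₗ[ℝ] E).IsSymmetric) {δ : ℝ}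
    (hδ : 0 < δ) : ‖∇ (fun y => √(‖X y‖ ^ 2 + δ)) x‖ ^ 2 ≤
      LinearMap.trace ℝ E (fderiv ℝ X x ∘L fderiv ℝ X x) := by
  have htrace : 0 ≤ LinearMap.trace ℝ E (fderiv ℝ X x ∘L fderiv ℝ X x) :=
    (Finset.sum_nonneg fun i _ => sq_nonneg _).trans_eq
      (trace_comp_self_eq_sum_norm_sq hsymm (stdOrthonormalBasis ℝ E)).symm
  rw [gradient_sqrt_norm_sq_add hX hsymm hδ, norm_smul, mul_pow, norm_inv, inv_pow,
    Real.norm_eq_abs, sq_abs, Real.sq_sqrt (by positivity), inv_mul_le_iff₀ (by positivity)]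
  calc ‖fderiv ℝ X x (X x)‖ ^ 2
      ≤ LinearMap.trace ℝ E (fderiv ℝ X x ∘L fderiv ℝ X x) * ‖X x‖ ^ 2 :=
        norm_apply_sq_le_trace_mul_norm_sq hsymm (X x)
    _ ≤ (‖X x‖ ^ 2 + δ) * LinearMap.trace ℝ E (fderiv ℝ X x ∘L fderiv ℝ X x) := by
        nlinarith only [mul_nonneg hδ.le htrace]

variable [MeasurableSpace E] [BorelSpace E] {μ : Measure E} {ρ : E → ℝ}

lemma integrable_trace_fderiv_comp_fderiv [IsFiniteMeasureOnCompacts μ] {X : E → E}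
    (hX : ContDiff ℝ 1 X) (hXc : HasCompactSupport X) :
    Integrable (fun x => LinearMap.trace ℝ E (fderiv ℝ X x ∘L fderiv ℝ X x)) μ := by
  have hDX := hX.continuous_fderiv one_ne_zero
  have htrace : Continuous fun A : E →L[ℝ] E => LinearMap.trace ℝ E A :=
    (LinearMap.trace ℝ E ∘ₗ ContinuousLinearMap.coeLM ℝ).continuous_of_finiteDimensional
  exact (htrace.comp (hDX.clm_comp hDX)).integrable_of_hasCompactSupport
    ((hXc.fderiv ℝ).mono fun x hx h0 => hx (by simp [h0]))

lemma SchrodingerBound.mul_integral_norm_sq_le [IsFiniteMeasure μ] {lam : ℝ}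
    (hS : SchrodingerBound μ ρ lam) (hρ : Integrable ρ μ) {X : E → E} (hX : ContDiff ℝ 1 X)
    (hXc : HasCompactSupport X) (hsymm : ∀ x, (fderiv ℝ X x : E →ₗ[ℝ] E).IsSymmetric) :
    lam * ∫ x, ‖X x‖ ^ 2 ∂μ ≤ ∫ x, LinearMap.trace ℝ E (fderiv ℝ X x ∘L fderiv ℝ X x) ∂μ +
      ∫ x, ρ x * ‖X x‖ ^ 2 ∂μ := by
  have hX2 : Integrable (fun x => ‖X x‖ ^ 2) μ :=
    (hX.continuous.norm.pow 2).integrable_of_hasCompactSupport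
      (hXc.mono fun x hx h0 => hx (by simp [h0]))
  have hρX := integrable_mul_norm_sq hρ hX.continuous hXc
  have htrace := integrable_trace_fderiv_comp_fderiv (μ := μ) hX hXc
  have hreg (δ : ℝ) (hδ : 0 < δ) : lam * (∫ x, ‖X x‖ ^ 2 ∂μ + δ * μ.real univ) ≤
      ∫ x, LinearMap.trace ℝ E (fderiv ℝ X x ∘L fderiv ℝ X x) ∂μ +
        (∫ x, ρ x * ‖X x‖ ^ 2 ∂μ + δ * ∫ x, ρ x ∂μ) := by
    have hq : ContDiff ℝ 1 fun x => √(‖X x‖ ^ 2 + δ) :=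
      ((hX.norm_sq ℝ).add contDiff_const).sqrt fun x => by positivity
    have hsq (x) : √(‖X x‖ ^ 2 + δ) ^ 2 = ‖X x‖ ^ 2 + δ := Real.sq_sqrt (by positivity)
    have hkato (x) := norm_gradient_sqrt_norm_sq_add_sq_le (hX.differentiable one_ne_zero x)
      (hsymm x) hδ
    have hgrad : Integrable (fun x => ‖∇ (fun y => √(‖X y‖ ^ 2 + δ)) x‖ ^ 2) μ :=
      htrace.mono' ((contDiff_gradient (n := 0) hq).continuous.norm.pow 2).aestronglyMeasurable
        (ae_of_all _ fun x => by simpa using hkato x)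
    have h := hS _ (fun x => by positivity) hq
      (by simpa only [hsq] using hX2.fun_add (integrable_const δ)) hgrad
      (by simpa only [hsq, mul_add] using hρX.fun_add (hρ.mul_const δ))
    simp only [hsq, mul_add] at h
    rw [integral_add hX2 (integrable_const δ), integral_add hρX (hρ.mul_const δ),
      integral_mul_const, integral_const, smul_eq_mul] at h
    linarith [integral_mono hgrad htrace hkato]
  have hlim {a b : ℝ} : Tendsto (fun δ => a + δ * b) (𝓝[>] 0) (𝓝 a) :=
    (Continuous.tendsto' (by fun_prop) 0 a (by simp)).mono_left nhdsWithin_le_nhds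
  exact le_of_tendsto_of_tendsto (hlim.const_mul lam) (hlim.const_add _)
    (eventually_nhdsWithin_of_forall hreg)

end Kato

section Main

variable [FiniteDimensional ℝ E] [MeasurableSpace E] [BorelSpace E] {V ρ : E → ℝ}

lemma SchrodingerBound.mul_integral_norm_gradient_sq_le (hV : ContDiff ℝ 2 V)
    [IsFiniteMeasure (gibbs V)] {lam : ℝ} (hS : SchrodingerBound (gibbs V) ρ lam)
    (hρ : Integrable ρ (gibbs V))
    (hHess : ∀ x u, ρ x * ‖u‖ ^ 2 ≤ iteratedFDeriv ℝ 2 V x ![u, u])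
    {u : E → ℝ} (hu : ContDiff ℝ 3 u) (huc : HasCompactSupport u) :
    lam * ∫ x, ‖∇ u x‖ ^ 2 ∂gibbs V ≤ ∫ x, weightedDivergence V (∇ u) x ^ 2 ∂gibbs V := by
  have hX : ContDiff ℝ 2 (∇ u) := contDiff_gradient hu
  have hXc := hasCompactSupport_gradient huc
  have hX1 : ContDiff ℝ 1 (∇ u) := hX.of_le one_le_two
  have hD2V : Integrable (fun x => fderiv ℝ (fderiv ℝ V) x (∇ u x) (∇ u x)) (gibbs V) :=
    ((((hV.fderiv_right (m := 1) le_rfl).continuous_fderiv one_ne_zero).clm_apply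
      hX.continuous).clm_apply hX.continuous).integrable_of_hasCompactSupport
      (hXc.mono fun x hx h0 => hx (by simp [h0]))
  have hcurvature (x) :
      ρ x * ‖∇ u x‖ ^ 2 ≤ fderiv ℝ (fderiv ℝ V) x (∇ u x) (∇ u x) := by
    simpa [iteratedFDeriv_two_apply] using hHess x (∇ u x)
  rw [integral_weightedDivergence_sq hV hX hXc,
    integral_add (integrable_trace_fderiv_comp_fderiv hX1 hXc) hD2V]
  refine (hS.mul_integral_norm_sq_le hρ hX1 hXc fun x =>
    fderiv_gradient_isSymmetric (hu.of_le (by norm_num)) x).trans ?_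
  exact add_le_add_right (integral_mono (integrable_mul_norm_sq hρ hX.continuous hXc) hD2V
    hcurvature) _

lemma SchrodingerBound.mul_variance_le (hV : ContDiff ℝ 2 V) [IsProbabilityMeasure (gibbs V)]
    {lam : ℝ} (hlam : 0 ≤ lam) (hS : SchrodingerBound (gibbs V) ρ lam)
    (hρ : Integrable ρ (gibbs V))
    (hHess : ∀ x u, ρ x * ‖u‖ ^ 2 ≤ iteratedFDeriv ℝ 2 V x ![u, u])
    {g : E → ℝ} (hg : ContDiff ℝ 1 g) (hgc : HasCompactSupport g) :
    lam * ProbabilityTheory.variance g (gibbs V) ≤ ∫ x, ‖∇ g x‖ ^ 2 ∂gibbs V :=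
  mul_variance_le_of_forall_mul_le_integral_weightedDivergence_sq (hV.of_le one_le_two) hlam
    (fun _ hu huc => hS.mul_integral_norm_gradient_sq_le hV hρ hHess (contDiff_infty.1 hu 3) huc)
    hg hgc

lemma withDensity_exp_div_integral_eq_gibbs (hVint : Integrable fun x => exp (-V x)) :
    volume.withDensity (fun x => ENNReal.ofReal (exp (-V x) / ∫ y, exp (-V y))) =
      gibbs fun x => V x + log (∫ y, exp (-V y)) := by
  simp only [gibbs, neg_add, exp_add, exp_neg (log _), exp_log (integral_exp_pos hVint),
    div_eq_mul_inv]

lemma isProbabilityMeasure_withDensity_exp_div_integral (hVint : Integrable fun x => exp (-V x)) :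
    IsProbabilityMeasure
      (volume.withDensity fun x => ENNReal.ofReal (exp (-V x) / ∫ y, exp (-V y))) := by
  refine ⟨?_⟩
  rw [withDensity_apply _ .univ, Measure.restrict_univ, ← ofReal_integral_eq_lintegral_ofReal
    (hVint.div_const _) (ae_of_all _ fun x => by positivity), integral_div,
    div_self (integral_exp_pos hVint).ne', ENNReal.ofReal_one]

theorem stmt_3_general (hV : ContDiff ℝ 2 V) (hVint : Integrable fun x => exp (-V x))
    {μ : Measure E}
    (hμ : μ = volume.withDensity fun x => ENNReal.ofReal (exp (-V x) / ∫ y, exp (-V y)))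
    (hHess : ∀ x u, ρ x * ‖u‖ ^ 2 ≤ iteratedFDeriv ℝ 2 V x ![u, u])
    {ρ₀ : ℝ} (hρ₀ : ∀ x, ρ₀ ≤ ρ x) {m : ℝ} (hm : m = ∫ x, ρ x ∂μ) (hmpos : 0 < m)
    {c : E → E → ℝ≥0∞} (hc : Measurable (uncurry c))
    {L : ℝ≥0∞} (hL : L = costLipNorm c ρ) (hLfin : L ≠ ⊤)
    {α : ℝ≥0∞ → ℝ≥0∞} (hα : Monotone α) (hTI : TransportInformation c α μ)
    {r ε : ℝ} (hr : 1 ≤ r) (hε : 0 < ε)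
    (hpos : 0 < r * ρ₀ + (α (ENNReal.ofReal ((1 - ε) * m) / L)).toReal)
    {g : E → ℝ} (hg : ContDiff ℝ 1 g) (hgc : HasCompactSupport g) :
    ∫ x, g x ^ 2 ∂μ - (∫ x, g x ∂μ) ^ 2 ≤
      (1 / min (ε * m) (ρ₀ + (α (ENNReal.ofReal ((1 - ε) * m) / L)).toReal / r)) *
        ∫ x, ‖∇ g x‖ ^ 2 ∂μ := by
  set A := (α (ENNReal.ofReal ((1 - ε) * m) / L)).toReal / r with hA_def
  have hr0 : 0 < r := zero_lt_one.trans_le hr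
  have hA : ENNReal.ofReal A ≤ α (ENNReal.ofReal ((1 - ε) * m) / L) :=
    (ENNReal.ofReal_le_ofReal (div_le_self ENNReal.toReal_nonneg hr)).trans
      ENNReal.ofReal_toReal_le
  have hρA : 0 < ρ₀ + A := by
    rw [hA_def, ← mul_div_cancel_left₀ ρ₀ hr0.ne', ← add_div]
    exact div_pos hpos hr0
  have hlam : 0 < min (ε * m) (ρ₀ + A) := lt_min (mul_pos hε hmpos) hρA
  have hρ : Integrable ρ μ := not_imp_comm.1 integral_undef (hm ▸ hmpos.ne')
  have hprob : IsProbabilityMeasure μ :=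
    hμ ▸ isProbabilityMeasure_withDensity_exp_div_integral hVint
  have hS : SchrodingerBound μ ρ (min (ε * m) (ρ₀ + A)) := by
    subst hL
    convert hTI.schrodingerBound hα hc hLfin hρ hρ₀ hA using 2
    rw [← hm]
    ring
  rw [withDensity_exp_div_integral_eq_gibbs hVint] at hμ
  have hW : ContDiff ℝ 2 fun x => V x + log (∫ y, exp (-V y)) := hV.add contDiff_const
  have hfderiv : fderiv ℝ (fun x => V x + log (∫ y, exp (-V y))) = fderiv ℝ V :=
    funext fun _ => fderiv_add_const _
  subst hμ
  have hpoincare := hS.mul_variance_le hW hlam.le hρ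
    (fun x u => by simpa only [iteratedFDeriv_two_apply, hfderiv] using hHess x u) hg hgc
  rw [ProbabilityTheory.variance_eq_sub (hg.continuous.memLp_of_hasCompactSupport hgc)]
    at hpoincare
  rwa [one_div, inv_mul_eq_div, le_div_iff₀' hlam]

end Main

/-- Poincaré inequality with constant `1/min(εm, ρ₀ + α((1-ε)m/L)/r)` from a
transport-information inequality. -/
theorem stmt_3 {n : ℕ} (V ρ : EuclideanSpace ℝ (Fin n) → ℝ)
    (hV : ContDiff ℝ 2 V) (hVint : Integrable (fun x => Real.exp (-V x)))
    (μ : Measure (EuclideanSpace ℝ (Fin n)))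
    (hμ : μ = volume.withDensity
      (fun x => ENNReal.ofReal (Real.exp (-V x) / ∫ y, Real.exp (-V y))))
    (hρcont : Continuous ρ)
    (hHess : ∀ x u, ρ x * ‖u‖ ^ 2 ≤ iteratedFDeriv ℝ 2 V x ![u, u])
    (ρ₀ : ℝ) (hρ₀ : ∀ x, ρ₀ ≤ ρ x)
    (m : ℝ) (hm : m = ∫ x, ρ x ∂μ) (hmpos : 0 < m)
    (c : EuclideanSpace ℝ (Fin n) → EuclideanSpace ℝ (Fin n) → ℝ≥0∞)
    (hclsc : LowerSemicontinuous
      (fun p : EuclideanSpace ℝ (Fin n) × EuclideanSpace ℝ (Fin n) => c p.1 p.2))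
    (hcsymm : ∀ x y, c x y = c y x) (hcdiag : ∀ x, c x x = 0)
    (L : ℝ≥0∞) (hLdef : L = costLipNorm c ρ) (hLfin : L ≠ ⊤)
    (α : ℝ≥0∞ → ℝ≥0∞) (hαcont : Continuous α) (hαmono : StrictMono α)
    (hα0 : α 0 = 0) (hαfin : ∀ s, s ≠ ⊤ → α s ≠ ⊤)
    (hWI : ∀ f : EuclideanSpace ℝ (Fin n) → ℝ, (∀ x, 0 < f x) → ContDiff ℝ 1 f →
      IsProbabilityMeasure (μ.withDensity fun x => ENNReal.ofReal (f x)) →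
      α (transportCost c (μ.withDensity fun x => ENNReal.ofReal (f x)) μ) ≤
        ∫⁻ x, ENNReal.ofReal (‖gradient (fun y => Real.sqrt (f y)) x‖ ^ 2) ∂μ)
    (r ε : ℝ) (hr : 2 < r) (hε : ε ∈ Set.Ioo (0 : ℝ) 1)
    (hcond : 0 < r * ρ₀ + (α (ENNReal.ofReal ((1 - ε) * m) / L)).toReal) :
    ∀ g : EuclideanSpace ℝ (Fin n) → ℝ, ContDiff ℝ (⊤ : ℕ∞) g → HasCompactSupport g →
      ∫ x, g x ^ 2 ∂μ - (∫ x, g x ∂μ) ^ 2 ≤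
        (1 / min (ε * m) (ρ₀ + (α (ENNReal.ofReal ((1 - ε) * m) / L)).toReal / r)) *
          ∫ x, ‖gradient g x‖ ^ 2 ∂μ := by
  exact fun g hg hgc => stmt_3_general hV hVint hμ hHess hρ₀ hm hmpos hclsc.measurable hLdef hLfin
    hαmono.monotone hWI (one_le_two.trans hr.le) hε.1 hcond (hg.of_le (by norm_num)) hgc
end

section
/- Let (Ω, P) be a probability space, S : Ω → ℝ measurable, and let t > 0, λ > 0, m > 0, u₀ ∈ ℝ, L > 0, K ≥ 0, and α : [0,∞) → [0,∞). Assume S ≥ u₀·t almost surely, and that for every R > 0, P(m·t − S ≥ R·t) ≤ K·e^{−t·α(R/L)}. Then for every ε ∈ (0,1), E[e^{−λS}] ≤ (1 + K)·max(e^{−λ·ε·m·t}, e^{−t(λ·u₀ + α((1−ε)m/L))}). -/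
open MeasureTheory Real Set
open scoped ENNReal

/-!
Split `Ω` at the level `S = ε * m * t`. Above it the integrand `exp (-lam * S)` is at most
`exp (-lam * ε * m * t)`. At or below it the almost sure bound `u₀ * t ≤ S` controls the
integrand by `exp (-lam * u₀ * t)`, and this event is exactly the deviation
`(1 - ε) * m * t ≤ m * t - S`, so the tail hypothesis bounds its measure.
-/

section

variable {Ω : Type*} [MeasurableSpace Ω] {μ : Measure Ω} [IsFiniteMeasure μ] {X : Ω → ℝ}
  {a : ℝ}

theorem integral_antitone_comp_le_add {f : ℝ → ℝ} (hf : Antitone f) (hf_nonneg : ∀ x, 0 ≤ f x)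
    (hX : AEMeasurable X μ) (ha : ∀ᵐ ω ∂μ, a ≤ X ω) (b : ℝ) :
    ∫ ω, f (X ω) ∂μ ≤ μ.real univ * f b + μ.real {ω | X ω ≤ b} * f a := by
  set A : Set Ω := {ω | X ω ≤ b}
  have hA : NullMeasurableSet A μ := hX.nullMeasurable measurableSet_Iic
  have hint : Integrable (A.indicator fun _ ↦ f a) μ := (integrable_const _).indicator₀ hA
  have hbound : ∀ᵐ ω ∂μ, f (X ω) ≤ f b + A.indicator (fun _ ↦ f a) ω := by
    filter_upwards [ha] with ω haω
    by_cases hω : ω ∈ A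
    · rw [indicator_of_mem hω]
      exact (hf haω).trans (le_add_of_nonneg_left (hf_nonneg b))
    · rw [indicator_of_notMem hω, add_zero]
      exact hf (not_le.1 hω).le
  calc
    ∫ ω, f (X ω) ∂μ ≤ ∫ ω, (f b + A.indicator (fun _ ↦ f a) ω) ∂μ :=
      integral_mono_of_nonneg (.of_forall fun ω ↦ hf_nonneg (X ω))
        ((integrable_const _).add hint) hbound
    _ = μ.real univ * f b + μ.real A * f a := by
      rw [integral_add (integrable_const _) hint, integral_const, integral_indicator₀ hA,
        setIntegral_const, smul_eq_mul, smul_eq_mul]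

theorem integral_exp_neg_mul_le_mul_max {lam b K r : ℝ} (hlam : 0 ≤ lam) (hK : 0 ≤ K)
    (hX : AEMeasurable X μ) (ha : ∀ᵐ ω ∂μ, a ≤ X ω)
    (htail : μ.real {ω | X ω ≤ b} ≤ K * exp (-r)) :
    ∫ ω, exp (-lam * X ω) ∂μ ≤
      (μ.real univ + K) * max (exp (-(lam * b))) (exp (-(lam * a + r))) := by
  have hanti : Antitone fun x : ℝ ↦ exp (-lam * x) :=
    exp_monotone.comp_antitone (antitone_mul_left (neg_nonpos.2 hlam))
  calc
    ∫ ω, exp (-lam * X ω) ∂μ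
      ≤ μ.real univ * exp (-lam * b) + μ.real {ω | X ω ≤ b} * exp (-lam * a) :=
        integral_antitone_comp_le_add hanti (fun _ ↦ (exp_pos _).le) hX ha b
    _ ≤ μ.real univ * exp (-lam * b) + K * exp (-r) * exp (-lam * a) := by gcongr
    _ = μ.real univ * exp (-(lam * b)) + K * exp (-(lam * a + r)) := by
      rw [mul_assoc K, ← exp_add]
      ring_nf
    _ ≤ (μ.real univ + K) * max (exp (-(lam * b))) (exp (-(lam * a + r))) := by
      rw [add_mul]
      gcongr
      · exact le_max_left _ _
      · exact le_max_right _ _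

end

theorem stmt_5_general {Ω : Type*} [MeasurableSpace Ω] (μ : Measure Ω) [IsFiniteMeasure μ]
    (S : Ω → ℝ) (hS : AEMeasurable S μ) (t lam m u₀ K : ℝ) (hlam : 0 ≤ lam) (hm : 0 < m)
    (hK : 0 ≤ K) (I : ℝ → ℝ) (hlow : ∀ᵐ ω ∂μ, u₀ * t ≤ S ω)
    (hdev : ∀ R, 0 < R →
      μ {ω | R * t ≤ m * t - S ω} ≤ ENNReal.ofReal (K * exp (-t * I R)))
    (ε : ℝ) (hε : ε < 1) :
    ∫ ω, exp (-lam * S ω) ∂μ ≤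
      (μ.real univ + K) * max (exp (-(lam * ε * m * t)))
        (exp (-(t * (lam * u₀ + I ((1 - ε) * m))))) := by
  have hevent : {ω | S ω ≤ ε * m * t} = {ω | (1 - ε) * m * t ≤ m * t - S ω} := by
    ext ω
    simp only [mem_ofPred_eq]
    constructor <;> intro h <;> linarith
  have htail : μ.real {ω | S ω ≤ ε * m * t} ≤ K * exp (-(t * I ((1 - ε) * m))) := by
    rw [hevent, ← neg_mul]
    exact ENNReal.toReal_le_of_le_ofReal (by positivity)
      (hdev _ (mul_pos (sub_pos.2 hε) hm))
  convert integral_exp_neg_mul_le_mul_max hlam hK hS hlow htail using 4 <;> ring_nf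

/-- Abstract deviation-to-Laplace-transform bound: if `S ≥ u₀·t` a.s. and
deviations of `m·t - S` have exponential tails governed by `α`, then the Laplace transform
`E[e^{-λS}]` is controlled. -/
theorem stmt_5 {Ω : Type*} [MeasurableSpace Ω] (P : Measure Ω) [IsProbabilityMeasure P]
    (S : Ω → ℝ) (hS : Measurable S)
    (t lam m u₀ L K : ℝ) (ht : 0 < t) (hlam : 0 < lam) (hm : 0 < m) (hL : 0 < L)
    (hK : 0 ≤ K)
    (α : ℝ → ℝ) (hα : ∀ x, 0 ≤ x → 0 ≤ α x)
    (hlow : ∀ᵐ ω ∂P, u₀ * t ≤ S ω)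
    (hdev : ∀ R, 0 < R →
      P {ω | R * t ≤ m * t - S ω} ≤ ENNReal.ofReal (K * Real.exp (-t * α (R / L)))) :
    ∀ ε ∈ Set.Ioo (0 : ℝ) 1,
      ∫ ω, Real.exp (-lam * S ω) ∂P ≤
        (1 + K) * max (Real.exp (-(lam * ε * m * t)))
          (Real.exp (-(t * (lam * u₀ + α ((1 - ε) * m / L))))) := by
  intro ε hε
  simpa only [probReal_univ] using stmt_5_general P S hS.aemeasurable t lam m u₀ K hlam.le hm hK
    (fun R ↦ α (R / L)) hlow hdev ε hε.2
end

section
/- Let P and Q be probability measures on a measurable space and A a measurable set with Q(A) > 0. Then P(A) · log(1 + 1/Q(A)) ≤ log 2 + H(P|Q), where H(P|Q) is the relative entropy (Kullback–Leibler divergence) of P with respect to Q (equal to +∞ if P is not absolutely continuous with respect to Q). -/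
/-!
By the Donsker–Varadhan inequality, `∫ f dP ≤ log ∫ e^f dQ + H(P|Q)`. For `f = c 𝟙_A` it reads
`c P(A) ≤ log (Q(Ω) + Q(A) (e^c - 1)) + H(P|Q)`, and `c = log (1 + 1 / Q(A))` is the value for
which the logarithm becomes `log (Q(Ω) + 1)`. A general set `A` is first enlarged to a
measurable set of the same `Q`-measure, which can only increase `P(A)`.
-/

open MeasureTheory
open scoped ENNReal Classical

/-- The relative entropy (Kullback–Leibler divergence) `H(P|Q) = ∫ log(dP/dQ) dP`,
equal to `+∞` if `P` is not absolutely continuous w.r.t. `Q` (or the log-likelihood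
ratio is not integrable). -/
noncomputable def relEntropy {Ω : Type*} [MeasurableSpace Ω]
    (P Q : MeasureTheory.Measure Ω) : EReal :=
  if P ≪ Q ∧ MeasureTheory.Integrable (MeasureTheory.llr P Q) P
  then ((∫ x, MeasureTheory.llr P Q x ∂P : ℝ) : EReal)
  else ⊤

lemma exp_indicator_const {Ω : Type*} (A : Set Ω) (c : ℝ) (x : Ω) :
    Real.exp (A.indicator (fun _ ↦ c) x) = 1 + A.indicator (fun _ ↦ Real.exp c - 1) x := by
  by_cases hx : x ∈ A <;> simp [hx]

section

variable {Ω : Type*} [MeasurableSpace Ω] {P Q : Measure Ω} {A : Set Ω}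

lemma integrable_exp_indicator_const [IsFiniteMeasure Q] (hA : MeasurableSet A) (c : ℝ) :
    Integrable (fun x ↦ Real.exp (A.indicator (fun _ ↦ c) x)) Q := by
  simp only [exp_indicator_const]
  exact (integrable_const 1).add ((integrable_const _).indicator hA)

lemma integral_exp_indicator_const [IsFiniteMeasure Q] (hA : MeasurableSet A) (c : ℝ) :
    ∫ x, Real.exp (A.indicator (fun _ ↦ c) x) ∂Q =
      Q.real Set.univ + Q.real A * (Real.exp c - 1) := by
  simp only [exp_indicator_const]
  rw [integral_add (integrable_const 1) ((integrable_const _).indicator hA),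
    integral_indicator_const _ hA, integral_const, smul_eq_mul, smul_eq_mul, mul_one]

-- Gibbs' inequality for `P` relative to the exponential tilt `e^f Q / ∫ e^f dQ`.
lemma integral_le_log_integral_exp_add_integral_llr [IsProbabilityMeasure P] [SigmaFinite Q]
    {f : Ω → ℝ} (hPQ : P ≪ Q) (hllr : Integrable (llr P Q) P) (hf : Integrable f P)
    (hexp : Integrable (fun x ↦ Real.exp (f x)) Q) :
    ∫ x, f x ∂P ≤ Real.log (∫ x, Real.exp (f x) ∂Q) + ∫ x, llr P Q x ∂P := by
  have gibbs : 0 ≤ ∫ x, llr P (Q.tilted f) x ∂P + (Q.tilted f).real Set.univ - P.real Set.univ :=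
    InformationTheory.integral_llr_add_sub_measure_univ_nonneg
      (hPQ.trans (absolutelyContinuous_tilted hexp))
      (integrable_llr_tilted_right hPQ hf hllr hexp)
  have tilted_univ_le : (Q.tilted f).real Set.univ ≤ 1 := measureReal_le_one
  rw [integral_llr_tilted_right hPQ hf hexp hllr, probReal_univ (μ := P)] at gibbs
  linarith

lemma integral_le_log_integral_exp_add_relEntropy [IsProbabilityMeasure P] [SigmaFinite Q]
    {f : Ω → ℝ} (hf : Integrable f P) (hexp : Integrable (fun x ↦ Real.exp (f x)) Q) :
    ((∫ x, f x ∂P : ℝ) : EReal) ≤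
      (Real.log (∫ x, Real.exp (f x) ∂Q) : EReal) + relEntropy P Q := by
  unfold relEntropy
  split_ifs with h
  · exact_mod_cast integral_le_log_integral_exp_add_integral_llr h.1 h.2 hf hexp
  · rw [EReal.coe_add_top]
    exact le_top

lemma measureReal_mul_le_log_add_relEntropy [IsProbabilityMeasure P] [IsFiniteMeasure Q]
    (hA : MeasurableSet A) (c : ℝ) :
    ((P.real A * c : ℝ) : EReal) ≤
      (Real.log (Q.real Set.univ + Q.real A * (Real.exp c - 1)) : EReal) + relEntropy P Q := by
  have h := integral_le_log_integral_exp_add_relEntropy (P := P) (Q := Q)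
    ((integrable_const c).indicator hA) (integrable_exp_indicator_const hA c)
  rwa [integral_indicator_const c hA, smul_eq_mul, integral_exp_indicator_const hA] at h

end

theorem stmt_6_general {Ω : Type*} [MeasurableSpace Ω] (P Q : Measure Ω)
    [IsProbabilityMeasure P] [IsFiniteMeasure Q] (A : Set Ω) (hQA : 0 < Q A) :
    ((P A).toReal * Real.log (1 + 1 / (Q A).toReal) : EReal) ≤
      (Real.log (Q.real Set.univ + 1) : EReal) + relEntropy P Q := by
  set c := Real.log (1 + 1 / (Q A).toReal)
  have hq : 0 < (Q A).toReal := ENNReal.toReal_pos hQA.ne' (measure_ne_top Q A)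
  have hc : 0 ≤ c := Real.log_nonneg (le_add_of_nonneg_right (by positivity))
  have hcq : Q.real (toMeasurable Q A) * (Real.exp c - 1) = 1 := by
    rw [measureReal_def, measure_toMeasurable, Real.exp_log (by positivity), add_sub_cancel_left,
      mul_one_div_cancel hq.ne']
  have hPA : (P A).toReal ≤ P.real (toMeasurable Q A) :=
    measureReal_mono (subset_toMeasurable Q A)
  calc ((P A).toReal * c : EReal)
      ≤ ((P.real (toMeasurable Q A) * c : ℝ) : EReal) := by
        exact_mod_cast mul_le_mul_of_nonneg_right hPA hc
    _ ≤ Real.log (Q.real Set.univ + 1) + relEntropy P Q := by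
        simpa only [hcq] using measureReal_mul_le_log_add_relEntropy (P := P) (Q := Q)
          (measurableSet_toMeasurable Q A) c

/-- The entropy inequality for events:
`P(A)·log(1 + 1/Q(A)) ≤ log 2 + H(P|Q)`. -/
theorem stmt_6 {Ω : Type*} [MeasurableSpace Ω] (P Q : Measure Ω)
    [IsProbabilityMeasure P] [IsProbabilityMeasure Q]
    (A : Set Ω) (hA : MeasurableSet A) (hQA : 0 < Q A) :
    ((P A).toReal * Real.log (1 + 1 / (Q A).toReal) : EReal) ≤
      (Real.log 2 : EReal) + relEntropy P Q := by
  simpa [one_add_one_eq_two] using stmt_6_general P Q A hQA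
end

section
/- Let V : ℝⁿ → ℝ be C² and ρ : ℝⁿ → ℝ continuous such that ⟨u, Hess V(z) u⟩ ≥ ρ(z)‖u‖² for all z, u ∈ ℝⁿ. Let x, y : [0,T] → ℝⁿ be differentiable curves satisfying x'(t) − y'(t) = −(∇V(x(t)) − ∇V(y(t))) for all t ∈ [0,T]. Then for every t ∈ [0,T], ‖x(t) − y(t)‖ ≤ ‖x(0) − y(0)‖ · exp(−∫₀ᵗ ∫₀¹ ρ(λ·x(s) + (1−λ)·y(s)) dλ ds). -/
open MeasureTheory Real Set
open scoped RealInnerProductSpace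

/-!
Along the segment from `y` to `x`, integrating `Hess V ≥ ρ` in the direction `x - y` gives
`⟪∇V x - ∇V y, x - y⟫ ≥ R(x, y) ‖x - y‖²`, where `R(x, y)` is the average of `ρ` over the segment.
In the synchronous coupling the noise cancels, so `‖x - y‖²` is differentiable even when `x` and
`y` are not, and this bound says that its derivative is at most `-2 R(x, y) ‖x - y‖²`; Grönwall's
inequality with time-dependent rate concludes.
-/

section Gronwall

variable {a b : ℝ} {k : ℝ → ℝ}

theorem hasDerivAt_integral_of_continuousOn_Icc (hk : ContinuousOn k (Icc a b)) {t : ℝ}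
    (ht : t ∈ Ioo a b) : HasDerivAt (fun t => ∫ s in a..t, k s) (k t) t :=
  intervalIntegral.integral_hasDerivAt_right
    ((hk.mono (Icc_subset_Icc_right ht.2.le)).intervalIntegrable_of_Icc ht.1.le)
    ((hk.mono Ioo_subset_Icc_self).stronglyMeasurableAtFilter isOpen_Ioo t ht)
    (hk.continuousAt (Icc_mem_nhds ht.1 ht.2))

theorem le_mul_exp_integral_of_deriv_le_mul {f f' : ℝ → ℝ} (hf : ContinuousOn f (Icc a b))
    (hf' : ∀ t ∈ Ioo a b, HasDerivAt f (f' t) t) (hk : ContinuousOn k (Icc a b))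
    (bound : ∀ t ∈ Ioo a b, f' t ≤ k t * f t) :
    ∀ t ∈ Icc a b, f t ≤ f a * exp (∫ s in a..t, k s) := by
  intro t ht
  have hab : a ≤ b := ht.1.trans ht.2
  let K : ℝ → ℝ := fun t => ∫ s in a..t, k s
  have hK : ContinuousOn K (Icc a b) := by
    rw [← uIcc_of_le hab] at hk ⊢
    exact intervalIntegral.continuousOn_primitive_interval (hk.integrableOn_compact isCompact_uIcc)
  have hderiv : ∀ s ∈ Ioo a b,
      HasDerivAt (fun t => f t * exp (-K t)) ((f' s - k s * f s) * exp (-K s)) s := by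
    intro s hs
    have hmul : HasDerivAt (fun t => f t * exp (-K t))
        (f' s * exp (-K s) + f s * (exp (-K s) * -k s)) s :=
      (hf' s hs).mul (hasDerivAt_integral_of_continuousOn_Icc hk hs).neg.exp
    exact hmul.congr_deriv (by ring)
  have hderiv_nonpos : ∀ s ∈ Ioo a b, (f' s - k s * f s) * exp (-K s) ≤ 0 := fun s hs =>
    mul_nonpos_of_nonpos_of_nonneg (sub_nonpos.2 (bound s hs)) (exp_pos _).le
  have hanti : AntitoneOn (fun t => f t * exp (-K t)) (Icc a b) := by
    rw [← interior_Icc] at hderiv hderiv_nonpos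
    exact antitoneOn_of_hasDerivWithinAt_nonpos (convex_Icc a b) (hf.mul hK.neg.rexp)
      (fun s hs => (hderiv s hs).hasDerivWithinAt) hderiv_nonpos
  have hle : f t * exp (-K t) ≤ f a := by
    simpa [K] using hanti (left_mem_Icc.2 hab) ht ht.1
  rwa [exp_neg, ← div_eq_mul_inv, div_le_iff₀ (exp_pos _)] at hle

theorem norm_le_mul_exp_integral_of_inner_deriv_le_mul {E : Type*} [NormedAddCommGroup E]
    [InnerProductSpace ℝ E] {f f' : ℝ → E} (hf : ContinuousOn f (Icc a b))
    (hf' : ∀ t ∈ Ioo a b, HasDerivAt f (f' t) t) (hk : ContinuousOn k (Icc a b))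
    (bound : ∀ t ∈ Ioo a b, ⟪f t, f' t⟫ ≤ k t * ‖f t‖ ^ 2) :
    ∀ t ∈ Icc a b, ‖f t‖ ≤ ‖f a‖ * exp (∫ s in a..t, k s) := by
  intro t ht
  have hsq : ‖f t‖ ^ 2 ≤ ‖f a‖ ^ 2 * exp (∫ s in a..t, 2 * k s) :=
    le_mul_exp_integral_of_deriv_le_mul (hf.norm.pow 2) (fun s hs => (hf' s hs).norm_sq)
      (continuousOn_const.mul hk) (fun s hs => by simpa [mul_assoc] using bound s hs) t ht
  refine (sq_le_sq₀ (norm_nonneg _) (by positivity)).1 ?_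
  rwa [mul_pow, ← exp_nat_mul, Nat.cast_ofNat, ← intervalIntegral.integral_const_mul]

end Gronwall

section SegmentIntegral

variable {E F : Type*} [NormedAddCommGroup E] [NormedSpace ℝ E] [NormedAddCommGroup F]
  [NormedSpace ℝ F]

theorem continuous_integral_segment {f : E → F} (hf : Continuous f) :
    Continuous fun p : E × E => ∫ l in (0 : ℝ)..1, f (l • p.1 + (1 - l) • p.2) :=
  intervalIntegral.continuous_parametric_intervalIntegral_of_continuous' (by fun_prop) 0 1

theorem integral_fderiv_segment_eq_sub [CompleteSpace F] {f : E → F} (hf : ContDiff ℝ 1 f)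
    (x y : E) :
    ∫ l in (0 : ℝ)..1, fderiv ℝ f (l • x + (1 - l) • y) (x - y) = f x - f y := by
  have hderiv (l : ℝ) : HasDerivAt (fun l : ℝ => f (l • x + (1 - l) • y))
      (fderiv ℝ f (l • x + (1 - l) • y) (x - y)) l := by
    have hsegment : HasDerivAt (fun l : ℝ => l • x + (1 - l) • y) (x - y) l := by
      have hadd := ((hasDerivAt_id l).smul_const x).add
        (((hasDerivAt_id l).const_sub 1).smul_const y)
      exact hadd.congr_deriv (by module)
    exact (hf.differentiable one_ne_zero _).hasFDerivAt.comp_hasDerivAt l hsegment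
  have hcont : Continuous fun l : ℝ => fderiv ℝ f (l • x + (1 - l) • y) (x - y) :=
    ((hf.continuous_fderiv one_ne_zero).comp (by fun_prop)).clm_apply continuous_const
  simpa using intervalIntegral.integral_eq_sub_of_hasDerivAt (fun l _ => hderiv l)
    (hcont.intervalIntegrable 0 1)

theorem integral_segment_mul_sq_norm_le_fderiv_sub {V ρ : E → ℝ} (hV : ContDiff ℝ 2 V)
    (hρ : Continuous ρ) (hHess : ∀ z u : E, ρ z * ‖u‖ ^ 2 ≤ iteratedFDeriv ℝ 2 V z ![u, u])
    (x y : E) :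
    (∫ l in (0 : ℝ)..1, ρ (l • x + (1 - l) • y)) * ‖x - y‖ ^ 2 ≤
      fderiv ℝ V x (x - y) - fderiv ℝ V y (x - y) := by
  have hdV : ContDiff ℝ 1 (fderiv ℝ V) := hV.fderiv_right (by norm_num)
  have hcont : Continuous fun l : ℝ => fderiv ℝ (fderiv ℝ V) (l • x + (1 - l) • y) (x - y) :=
    ((hdV.continuous_fderiv one_ne_zero).comp (by fun_prop)).clm_apply continuous_const
  calc (∫ l in (0 : ℝ)..1, ρ (l • x + (1 - l) • y)) * ‖x - y‖ ^ 2
      = ∫ l in (0 : ℝ)..1, ρ (l • x + (1 - l) • y) * ‖x - y‖ ^ 2 :=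
        (intervalIntegral.integral_mul_const _ _).symm
    _ ≤ ∫ l in (0 : ℝ)..1, fderiv ℝ (fderiv ℝ V) (l • x + (1 - l) • y) (x - y) (x - y) := by
        refine intervalIntegral.integral_mono_on zero_le_one
          (Continuous.intervalIntegrable (by fun_prop) _ _)
          ((hcont.clm_apply continuous_const).intervalIntegrable _ _) fun l _ => ?_
        simpa [iteratedFDeriv_two_apply] using hHess (l • x + (1 - l) • y) (x - y)
    _ = (∫ l in (0 : ℝ)..1, fderiv ℝ (fderiv ℝ V) (l • x + (1 - l) • y) (x - y)) (x - y) :=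
        (ContinuousLinearMap.intervalIntegral_apply (hcont.intervalIntegrable _ _) _).symm
    _ = fderiv ℝ V x (x - y) - fderiv ℝ V y (x - y) := by
        rw [integral_fderiv_segment_eq_sub hdV, sub_apply]

end SegmentIntegral

theorem integral_segment_mul_sq_norm_le_inner_gradient_sub {E : Type*} [NormedAddCommGroup E]
    [InnerProductSpace ℝ E] [CompleteSpace E] {V ρ : E → ℝ} (hV : ContDiff ℝ 2 V)
    (hρ : Continuous ρ) (hHess : ∀ z u : E, ρ z * ‖u‖ ^ 2 ≤ iteratedFDeriv ℝ 2 V z ![u, u])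
    (x y : E) :
    (∫ l in (0 : ℝ)..1, ρ (l • x + (1 - l) • y)) * ‖x - y‖ ^ 2 ≤
      ⟪x - y, gradient V x - gradient V y⟫ := by
  rw [real_inner_comm, inner_sub_left, inner_gradient_left, inner_gradient_left]
  exact integral_segment_mul_sq_norm_le_fderiv_sub hV hρ hHess x y

theorem stmt_10_general {E : Type*} [NormedAddCommGroup E] [InnerProductSpace ℝ E]
    [CompleteSpace E] {V ρ : E → ℝ} (hV : ContDiff ℝ 2 V) (hρ : Continuous ρ)
    (hHess : ∀ z u : E, ρ z * ‖u‖ ^ 2 ≤ iteratedFDeriv ℝ 2 V z ![u, u])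
    {a b : ℝ} {x y : ℝ → E} (hx : ContinuousOn x (Icc a b)) (hy : ContinuousOn y (Icc a b))
    (hode : ∀ t ∈ Ioo a b,
      HasDerivAt (fun s => x s - y s) (-(gradient V (x t) - gradient V (y t))) t) :
    ∀ t ∈ Icc a b,
      ‖x t - y t‖ ≤ ‖x a - y a‖ *
        exp (-∫ s in a..t, ∫ l in (0 : ℝ)..1, ρ (l • x s + (1 - l) • y s)) := by
  have hrate : ContinuousOn (fun s => ∫ l in (0 : ℝ)..1, ρ (l • x s + (1 - l) • y s)) (Icc a b) :=
    (continuous_integral_segment hρ).comp_continuousOn (hx.prodMk hy)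
  have bound (s : ℝ) : ⟪x s - y s, -(gradient V (x s) - gradient V (y s))⟫ ≤
      -(∫ l in (0 : ℝ)..1, ρ (l • x s + (1 - l) • y s)) * ‖x s - y s‖ ^ 2 := by
    rw [inner_neg_right, neg_mul]
    exact neg_le_neg (integral_segment_mul_sq_norm_le_inner_gradient_sub hV hρ hHess (x s) (y s))
  intro t ht
  rw [← intervalIntegral.integral_neg]
  exact norm_le_mul_exp_integral_of_inner_deriv_le_mul (hx.sub hy) hode hrate.neg
    (fun s _ => bound s) t ht

/-- Pathwise contraction for the synchronous coupling under the variable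
curvature lower bound `Hess V ≥ ρ`. -/
theorem stmt_10 {n : ℕ} (V ρ : EuclideanSpace ℝ (Fin n) → ℝ)
    (hV : ContDiff ℝ 2 V) (hρ : Continuous ρ)
    (hHess : ∀ z u : EuclideanSpace ℝ (Fin n),
      ρ z * ‖u‖ ^ 2 ≤ iteratedFDeriv ℝ 2 V z ![u, u])
    (T : ℝ) (hT : 0 ≤ T)
    (x y x' y' : ℝ → EuclideanSpace ℝ (Fin n))
    (hx : ∀ t ∈ Set.Icc 0 T, HasDerivAt x (x' t) t)
    (hy : ∀ t ∈ Set.Icc 0 T, HasDerivAt y (y' t) t)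
    (hode : ∀ t ∈ Set.Icc 0 T,
      x' t - y' t = -(gradient V (x t) - gradient V (y t))) :
    ∀ t ∈ Set.Icc 0 T,
      ‖x t - y t‖ ≤ ‖x 0 - y 0‖ *
        Real.exp (-∫ s in (0 : ℝ)..t,
          ∫ l in (0 : ℝ)..1, ρ (l • x s + (1 - l) • y s)) := by
  refine stmt_10_general hV hρ hHess (HasDerivAt.continuousOn hx) (HasDerivAt.continuousOn hy) ?_
  exact fun t ht => have ht := Ioo_subset_Icc_self ht; hode t ht ▸ (hx t ht).sub (hy t ht)
end

section
/- Let E be a finite-dimensional real inner product space, t > 0, and A : [0,t] → (E →L E) a Bochner-integrable family of self-adjoint continuous linear operators. Let r : [0,t] → ℝ be integrable with ⟨u, A(s)u⟩ ≥ r(s)‖u‖² for all u ∈ E and all s ∈ [0,t]. Set B = ∫₀ᵗ A(s) ds. Then for every u ∈ E, ⟨u, exp(−2B) u⟩ ≤ exp(−2 ∫₀ᵗ r(s) ds) · ‖u‖². -/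
open MeasureTheory Real Set
open scoped RealInnerProductSpace

/-!
Put `m = ∫ r`. Integrating the hypothesis gives `⟪v, B v⟫ ≥ m ‖v‖²` for every `v`. The curve
`f s = exp (-2 s B) u` solves `f' = -2 B f`, so `(‖f‖²)' = -4 ⟪f, B f⟫ ≤ -4 m ‖f‖²`, and Grönwall's
inequality yields `‖exp (-2 B) u‖ ≤ exp (-2 m) ‖u‖`; conclude by Cauchy–Schwarz.
-/

section OneSidedGrowth

variable {E : Type*} [NormedAddCommGroup E] [InnerProductSpace ℝ E]

theorem norm_le_exp_mul_norm_of_inner_deriv_right_le {f f' : ℝ → E} {m a b : ℝ}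
    (hf : ContinuousOn f (Icc a b)) (hf' : ∀ x ∈ Ico a b, HasDerivWithinAt f (f' x) (Ici x) x)
    (bound : ∀ x ∈ Ico a b, ⟪f x, f' x⟫ ≤ m * ‖f x‖ ^ 2) :
    ∀ x ∈ Icc a b, ‖f x‖ ≤ exp (m * (x - a)) * ‖f a‖ := by
  intro x hx
  have sq_bound : ‖f x‖ ^ 2 ≤ gronwallBound (‖f a‖ ^ 2) (2 * m) 0 (x - a) :=
    le_gronwallBound_of_liminf_deriv_right_le (f := fun y ↦ ‖f y‖ ^ 2) (hf.norm.pow 2)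
      (fun y hy _ hr ↦ (hf' y hy).norm_sq.liminf_right_slope_le hr) le_rfl
      (fun y hy ↦ by linarith [bound y hy]) x hx
  refine le_of_sq_le_sq ?_ (by positivity)
  calc ‖f x‖ ^ 2 ≤ ‖f a‖ ^ 2 * exp (2 * m * (x - a)) := by rwa [gronwallBound_ε0] at sq_bound
    _ = (exp (m * (x - a)) * ‖f a‖) ^ 2 := by
      rw [mul_pow, ← exp_nat_mul, Nat.cast_ofNat, mul_assoc, mul_comm]

variable [CompleteSpace E] {T : E →L[ℝ] E} {m : ℝ}

theorem norm_exp_apply_le_of_inner_le (hT : ∀ v, ⟪v, T v⟫ ≤ m * ‖v‖ ^ 2) (u : E) :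
    ‖NormedSpace.exp T u‖ ≤ exp m * ‖u‖ := by
  have hderiv (s : ℝ) : HasDerivAt (fun s : ℝ ↦ NormedSpace.exp (s • T) u)
      (T (NormedSpace.exp (s • T) u)) s :=
    (ContinuousLinearMap.apply ℝ E u).hasFDerivAt.comp_hasDerivAt s
      (hasDerivAt_exp_smul_const' T s)
  simpa using norm_le_exp_mul_norm_of_inner_deriv_right_le (a := 0) (b := 1)
    (fun s _ ↦ (hderiv s).continuousAt.continuousWithinAt)
    (fun s _ ↦ (hderiv s).hasDerivWithinAt) (fun s _ ↦ hT _) 1 (right_mem_Icc.2 zero_le_one)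

theorem inner_exp_apply_le_of_inner_le (hT : ∀ v, ⟪v, T v⟫ ≤ m * ‖v‖ ^ 2) (u : E) :
    ⟪u, NormedSpace.exp T u⟫ ≤ exp m * ‖u‖ ^ 2 :=
  calc ⟪u, NormedSpace.exp T u⟫ ≤ ‖u‖ * ‖NormedSpace.exp T u‖ := real_inner_le_norm _ _
    _ ≤ ‖u‖ * (exp m * ‖u‖) := by gcongr; exact norm_exp_apply_le_of_inner_le hT u
    _ = exp m * ‖u‖ ^ 2 := by ring

end OneSidedGrowth

section Integral

variable {E : Type*} [NormedAddCommGroup E] [InnerProductSpace ℝ E] [CompleteSpace E]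
  {α : Type*} [MeasurableSpace α] {μ : Measure α} {A : α → E →L[ℝ] E} {r : α → ℝ}

theorem integral_mul_norm_sq_le_inner_integral_apply (hA : Integrable A μ) (hr : Integrable r μ)
    {u : E} (hlow : ∀ᵐ s ∂μ, r s * ‖u‖ ^ 2 ≤ ⟪u, A s u⟫) :
    (∫ s, r s ∂μ) * ‖u‖ ^ 2 ≤ ⟪u, (∫ s, A s ∂μ) u⟫ := by
  have hAu : Integrable (fun s ↦ A s u) μ := hA.apply_continuousLinearMap u
  rw [ContinuousLinearMap.integral_apply hA, ← integral_inner hAu, ← integral_mul_const]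
  exact integral_mono_ae (hr.mul_const _) (hAu.const_inner u) hlow

theorem stmt_11_general (hA : Integrable A μ) (hr : Integrable r μ)
    (hlow : ∀ u, ∀ᵐ s ∂μ, r s * ‖u‖ ^ 2 ≤ ⟪u, A s u⟫) (u : E) :
    ⟪u, NormedSpace.exp ((-2 : ℝ) • ∫ s, A s ∂μ) u⟫ ≤ exp (-2 * ∫ s, r s ∂μ) * ‖u‖ ^ 2 := by
  refine inner_exp_apply_le_of_inner_le (fun v ↦ ?_) u
  rw [smul_apply, inner_smul_right]
  linarith [integral_mul_norm_sq_le_inner_integral_apply hA hr (hlow v)]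

end Integral

/-- If a family of self-adjoint operators `A(s)` satisfies
`⟨u, A(s)u⟩ ≥ r(s)‖u‖²`, then `⟨u, exp(-2∫A)u⟩ ≤ exp(-2∫r)‖u‖²`. -/
theorem stmt_11 {E : Type*} [NormedAddCommGroup E] [InnerProductSpace ℝ E]
    [FiniteDimensional ℝ E]
    (t : ℝ) (ht : 0 < t)
    (A : ℝ → E →L[ℝ] E) (hA : IntegrableOn A (Set.Icc 0 t))
    (hself : ∀ s ∈ Set.Icc (0 : ℝ) t, ∀ u v : E, ⟪A s u, v⟫ = ⟪u, A s v⟫)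
    (r : ℝ → ℝ) (hr : IntegrableOn r (Set.Icc 0 t))
    (hlow : ∀ s ∈ Set.Icc (0 : ℝ) t, ∀ u : E, r s * ‖u‖ ^ 2 ≤ ⟪u, A s u⟫)
    (B : E →L[ℝ] E) (hB : B = ∫ s in (0 : ℝ)..t, A s) :
    ∀ u : E, ⟪u, NormedSpace.exp ((-2 : ℝ) • B) u⟫ ≤
      Real.exp (-2 * ∫ s in (0 : ℝ)..t, r s) * ‖u‖ ^ 2 := by
  have : CompleteSpace E := FiniteDimensional.complete ℝ E
  rw [hB, intervalIntegral.integral_of_le ht.le, intervalIntegral.integral_of_le ht.le,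
    ← integral_Icc_eq_integral_Ioc, ← integral_Icc_eq_integral_Ioc]
  exact stmt_11_general hA hr fun u ↦
    ae_restrict_of_forall_mem measurableSet_Icc fun s hs ↦ hlow s hs u
end

section
/- Let g : [0,∞) → ℝ be convex and differentiable, and define V : ℝⁿ → ℝ by V(x) = g(‖x‖²). Then for all x, y ∈ ℝⁿ, ⟨∇V(x) − ∇V(y), x − y⟩ ≥ (g'(‖x‖²) + g'(‖y‖²)) · ‖x − y‖², where ∇V(x) = 2 g'(‖x‖²) x. -/
open MeasureTheory Real Set
open scoped RealInnerProductSpace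

/-!
The map `x ↦ f (‖x‖ ^ 2) • x` satisfies the exact identity
`2 ⟪a • x - b • y, x - y⟫ = (a + b) ‖x - y‖ ^ 2 + (a - b) (‖x‖ ^ 2 - ‖y‖ ^ 2)`, where
`a = f (‖x‖ ^ 2)` and `b = f (‖y‖ ^ 2)`. When `f` is the derivative of a convex function it is
monotone, so the last product is nonnegative.
-/

section InnerProductSpace

variable {E : Type*} [NormedAddCommGroup E] [InnerProductSpace ℝ E]

theorem two_mul_inner_smul_sub_smul_sub (a b : ℝ) (x y : E) :
    2 * ⟪a • x - b • y, x - y⟫ =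
      (a + b) * ‖x - y‖ ^ 2 + (a - b) * (‖x‖ ^ 2 - ‖y‖ ^ 2) := by
  simp only [norm_sub_sq_real, inner_sub_left, inner_sub_right, real_inner_smul_left,
    real_inner_self_eq_norm_sq, real_inner_comm x y]
  ring

theorem add_mul_norm_sub_sq_le_two_mul_inner_of_monotoneOn {f : ℝ → ℝ}
    (hf : MonotoneOn f (Ici 0)) (x y : E) :
    (f (‖x‖ ^ 2) + f (‖y‖ ^ 2)) * ‖x - y‖ ^ 2 ≤
      2 * ⟪f (‖x‖ ^ 2) • x - f (‖y‖ ^ 2) • y, x - y⟫ := by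
  have hmono : 0 ≤ (f (‖x‖ ^ 2) - f (‖y‖ ^ 2)) * (‖x‖ ^ 2 - ‖y‖ ^ 2) :=
    (hf.monovaryOn monotoneOn_id).sub_mul_sub_nonneg (sq_nonneg ‖y‖) (sq_nonneg ‖x‖)
  rw [two_mul_inner_smul_sub_smul_sub]
  exact le_add_of_nonneg_right hmono

variable [CompleteSpace E]

theorem hasGradientAt_comp_of_hasDerivWithinAt {g : ℝ → ℝ} {g' : ℝ} {s : Set ℝ}
    {f : E → ℝ} {f' x : E} (hg : HasDerivWithinAt g g' s (f x)) (hf : HasGradientAt f f' x)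
    (hs : ∀ᶠ z in nhds x, f z ∈ s) : HasGradientAt (g ∘ f) (g' • f') x := by
  rw [hasGradientAt_iff_hasFDerivAt] at hf ⊢
  refine (hg.hasFDerivWithinAt.comp_hasFDerivAt x hf hs).congr_fderiv ?_
  ext z
  simp [mul_comm]

theorem hasGradientAt_norm_sq (x : E) : HasGradientAt (fun z : E ↦ ‖z‖ ^ 2) ((2 : ℝ) • x) x := by
  rw [hasGradientAt_iff_hasFDerivAt]
  refine (hasStrictFDerivAt_norm_sq x).hasFDerivAt.congr_fderiv ?_
  ext z
  simp

theorem hasGradientAt_comp_norm_sq {g : ℝ → ℝ} {g' : ℝ} {x : E}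
    (hg : HasDerivWithinAt g g' (Ici 0) (‖x‖ ^ 2)) :
    HasGradientAt (fun z : E ↦ g (‖z‖ ^ 2)) ((2 * g') • x) x := by
  rw [mul_comm, mul_smul]
  exact hasGradientAt_comp_of_hasDerivWithinAt hg (hasGradientAt_norm_sq x)
    (.of_forall fun z ↦ sq_nonneg ‖z‖)

theorem stmt_14_general (g g' : ℝ → ℝ) (hconv : ConvexOn ℝ (Ici 0) g)
    (hg' : ∀ s ∈ Ici (0 : ℝ), HasDerivWithinAt g (g' s) (Ici 0) s)
    (V : E → ℝ) (hV : ∀ x, V x = g (‖x‖ ^ 2)) :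
    (∀ x : E, gradient V x = (2 * g' (‖x‖ ^ 2)) • x) ∧
    ∀ x y : E, (g' (‖x‖ ^ 2) + g' (‖y‖ ^ 2)) * ‖x - y‖ ^ 2 ≤
      ⟪gradient V x - gradient V y, x - y⟫ := by
  obtain rfl : V = fun x ↦ g (‖x‖ ^ 2) := funext hV
  have hgrad (x : E) : gradient (fun z : E ↦ g (‖z‖ ^ 2)) x = (2 * g' (‖x‖ ^ 2)) • x :=
    (hasGradientAt_comp_norm_sq (hg' _ (sq_nonneg ‖x‖))).gradient
  have hmono : MonotoneOn g' (Ici 0) :=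
    (hconv.monotoneOn_derivWithin fun s hs ↦ (hg' s hs).differentiableWithinAt).congr
      fun s hs ↦ (hg' s hs).derivWithin (uniqueDiffOn_Ici 0 s hs)
  refine ⟨hgrad, fun x y ↦ ?_⟩
  rw [hgrad, hgrad, mul_smul, mul_smul, ← smul_sub, real_inner_smul_left]
  exact add_mul_norm_sub_sq_le_two_mul_inner_of_monotoneOn hmono x y

end InnerProductSpace

/-- Radial potentials `V(x) = g(‖x‖²)` with `g` convex and differentiable
on `[0,∞)` satisfy the reinforced curvature condition with `κ(x) = g'(‖x‖²)`, and
`∇V(x) = 2g'(‖x‖²)·x`. -/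
theorem stmt_14 {n : ℕ} (g g' : ℝ → ℝ)
    (hconv : ConvexOn ℝ (Set.Ici 0) g)
    (hg' : ∀ s ∈ Set.Ici (0 : ℝ), HasDerivWithinAt g (g' s) (Set.Ici 0) s)
    (V : EuclideanSpace ℝ (Fin n) → ℝ) (hV : ∀ x, V x = g (‖x‖ ^ 2)) :
    (∀ x : EuclideanSpace ℝ (Fin n), gradient V x = (2 * g' (‖x‖ ^ 2)) • x) ∧
    ∀ x y : EuclideanSpace ℝ (Fin n),
      (g' (‖x‖ ^ 2) + g' (‖y‖ ^ 2)) * ‖x - y‖ ^ 2 ≤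
        ⟪gradient V x - gradient V y, x - y⟫ :=
  stmt_14_general g g' hconv hg' V hV
end

section
/- Let V : ℝⁿ → ℝ be C² and u ∈ ℝⁿ. Assume that x ↦ ⟨u, Hess V(x) u⟩ e^{−V(x)} and x ↦ ⟨u, ∇V(x)⟩² e^{−V(x)} are integrable on ℝⁿ, and that ⟨u, ∇V(x)⟩ e^{−V(x)} → 0 as ‖x‖ → ∞. Then ∫ ⟨u, Hess V(x) u⟩ e^{−V(x)} dx = ∫ ⟨u, ∇V(x)⟩² e^{−V(x)} dx; in particular this integral is nonnegative. -/
open MeasureTheory Real Set Filter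
open scoped RealInnerProductSpace

/-! The directional derivative of `g = V' e^{-V}`, where `V'` is the derivative of `V` along `u`, is
`V'' e^{-V} - V'² e^{-V}`. Decompose the space into the lines parallel to `u`: by Fubini almost all
of these lines carry an integrable derivative, and on each of them the fundamental theorem of
calculus gives a zero integral because `g` vanishes at both ends. -/

open Bornology Topology

section Lines

variable {E F : Type*} [NormedAddCommGroup E] [NormedSpace ℝ E] [NormedAddCommGroup F]
  [NormedSpace ℝ F]

theorem hasDerivAt_line_of_hasLineDerivAt {f : E → F} {f' : F} {x v : E} {t : ℝ}
    (hf : HasLineDerivAt ℝ f f' (x + t • v) v) :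
    HasDerivAt (fun s : ℝ => f (x + s • v)) f' t := by
  have hshift : HasDerivAt (fun s : ℝ => f (x + t • v + (s - t) • v)) f' t :=
    HasDerivAt.comp_sub_const t t (by simpa [HasLineDerivAt] using hf)
  simpa only [add_assoc, ← add_smul, add_sub_cancel] using hshift

theorem tendsto_add_smul_cobounded (x : E) {v : E} (hv : v ≠ 0) :
    Tendsto (fun t : ℝ => x + t • v) (cobounded ℝ) (cobounded E) := by
  refine (tendsto_const_add_cobounded x).comp (tendsto_norm_atTop_iff_cobounded.1 ?_)
  simpa only [norm_smul] using
    tendsto_norm_cobounded_atTop.atTop_mul_const (norm_pos_iff.2 hv)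

theorem integral_line_eq_zero_of_tendsto_cobounded [CompleteSpace F] {g g' : E → F} {c : F}
    {x v : E} (hv : v ≠ 0) (hderiv : ∀ t : ℝ, HasLineDerivAt ℝ g (g' (x + t • v)) (x + t • v) v)
    (hint : Integrable fun t : ℝ => g' (x + t • v)) (hlim : Tendsto g (cobounded E) (𝓝 c)) :
    ∫ t : ℝ, g' (x + t • v) = 0 := by
  have hends : Tendsto (fun t : ℝ => g (x + t • v)) (cobounded ℝ) (𝓝 c) :=
    hlim.comp (tendsto_add_smul_cobounded x hv)
  rw [IsOrderBornology.cobounded_eq, tendsto_sup] at hends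
  rw [integral_of_hasDerivAt_of_tendsto (fun t => hasDerivAt_line_of_hasLineDerivAt (hderiv t)) hint
    hends.1 hends.2, sub_self]

end Lines

section Haar

variable {E F : Type*} [NormedAddCommGroup E] [NormedSpace ℝ E] [FiniteDimensional ℝ E]
  [MeasurableSpace E] [BorelSpace E] {μ : Measure E} [μ.IsAddHaarMeasure]
  [NormedAddCommGroup F] [NormedSpace ℝ F]

theorem integral_eq_zero_of_integral_line_eq_zero {f : E → F} (hf : Integrable f μ) {v : E}
    (hv : v ≠ 0)
    (hline : ∀ x, Integrable (fun t : ℝ => f (x + t • v)) → ∫ t : ℝ, f (x + t • v) = 0) :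
    ∫ x, f x ∂μ = 0 := by
  obtain ⟨φ, hφ⟩ : ∃ φ : StrongDual ℝ E, φ v = 1 := SeparatingDual.exists_eq_one hv
  let e : E ≃L[ℝ] ℝ × φ.ker :=
    .equivOfRightInverse φ (.toSpanSingleton ℝ v) fun t => by simp [hφ]
  have he (t : ℝ) (y : φ.ker) : e.symm (t, y) = y + t • v := by
    simp [e, add_comm]
  have he_emb : MeasurableEmbedding e := e.toHomeomorph.measurableEmbedding
  have : (μ.map e).IsAddHaarMeasure := e.isAddHaarMeasure_map μ
  let ν : Measure (ℝ × φ.ker) := volume.prod Measure.addHaar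
  have hint : Integrable (fun z => f (e.symm z)) ν := by
    rw [ν.isAddLeftInvariant_eq_smul (μ.map e)]
    refine Integrable.smul_measure_nnreal ?_
    simpa [he_emb.integrable_map_iff, Function.comp_def] using hf
  have hzero : ∫ z, f (e.symm z) ∂ν = 0 := by
    rw [integral_prod_symm _ hint]
    refine integral_eq_zero_of_ae ?_
    filter_upwards [hint.prod_left_ae] with y hy
    simp only [he] at hy ⊢
    exact hline y hy
  calc ∫ x, f x ∂μ = ∫ z, f (e.symm z) ∂(μ.map e) := by simp [he_emb.integral_map]
    _ = 0 := by
      rw [(μ.map e).isAddLeftInvariant_eq_smul ν, integral_smul_nnreal_measure, hzero, smul_zero]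

theorem integral_eq_zero_of_hasLineDerivAt_of_tendsto_cobounded [CompleteSpace F] {g g' : E → F}
    {v : E} {c : F} (hderiv : ∀ x, HasLineDerivAt ℝ g (g' x) x v) (hint : Integrable g' μ)
    (hlim : Tendsto g (cobounded E) (𝓝 c)) : ∫ x, g' x ∂μ = 0 := by
  rcases eq_or_ne v 0 with rfl | hv
  · simp [fun x => (hderiv x).unique hasLineDerivAt_zero]
  · exact integral_eq_zero_of_integral_line_eq_zero hint hv fun x hx =>
      integral_line_eq_zero_of_tendsto_cobounded hv (fun _ => hderiv _) hx hlim

end Haar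

section Gradient

theorem hasLineDerivAt_fderiv_apply {𝕜 E F : Type*} [NontriviallyNormedField 𝕜]
    [NormedAddCommGroup E] [NormedSpace 𝕜 E] [NormedAddCommGroup F] [NormedSpace 𝕜 F]
    {f : E → F} {x : E} (hf : DifferentiableAt 𝕜 (fderiv 𝕜 f) x) (u v : E) :
    HasLineDerivAt 𝕜 (fun y => fderiv 𝕜 f y v) (iteratedFDeriv 𝕜 2 f x ![u, v]) x u := by
  rw [iteratedFDeriv_two_apply]
  simpa using (hf.hasFDerivAt.clm_apply (hasFDerivAt_const v x)).hasLineDerivAt u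

variable {E : Type*} [NormedAddCommGroup E] [InnerProductSpace ℝ E] [CompleteSpace E]
  {f : E → ℝ} {x : E}

theorem hasLineDerivAt_inner_gradient (hf : DifferentiableAt ℝ f x) (u : E) :
    HasLineDerivAt ℝ f ⟪u, gradient f x⟫ x u := by
  simpa [inner_gradient_right] using hf.hasFDerivAt.hasLineDerivAt u

theorem hasLineDerivAt_inner_gradient_iteratedFDeriv (hf : DifferentiableAt ℝ (fderiv ℝ f) x)
    (u v : E) :
    HasLineDerivAt ℝ (fun y => ⟪v, gradient f y⟫) (iteratedFDeriv ℝ 2 f x ![u, v]) x u := by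
  simpa [inner_gradient_right] using hasLineDerivAt_fderiv_apply hf u v

end Gradient

section Boltzmann

variable {E : Type*} [NormedAddCommGroup E] [NormedSpace ℝ E]

theorem hasLineDerivAt_mul_exp_neg {V W : E → ℝ} {V' W' : ℝ} {x u : E}
    (hV : HasLineDerivAt ℝ V V' x u) (hW : HasLineDerivAt ℝ W W' x u) :
    HasLineDerivAt ℝ (fun y => W y * exp (-V y))
      (W' * exp (-V x) - W x * V' * exp (-V x)) x u := by
  have hprod := HasDerivAt.fun_mul hW (HasDerivAt.fun_neg hV).exp
  simp only [zero_smul, add_zero] at hprod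
  exact hprod.congr_deriv (by ring)

theorem stmt_16_general [FiniteDimensional ℝ E] [MeasurableSpace E] [BorelSpace E] {μ : Measure E}
    [μ.IsAddHaarMeasure] {V V' V'' : E → ℝ} {u : E}
    (hV : ∀ x, HasLineDerivAt ℝ V (V' x) x u) (hV' : ∀ x, HasLineDerivAt ℝ V' (V'' x) x u)
    (h1 : Integrable (fun x => V'' x * exp (-V x)) μ)
    (h2 : Integrable (fun x => V' x ^ 2 * exp (-V x)) μ)
    (hdecay : Tendsto (fun x => V' x * exp (-V x)) (cobounded E) (𝓝 0)) :
    ∫ x, V'' x * exp (-V x) ∂μ = ∫ x, V' x ^ 2 * exp (-V x) ∂μ ∧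
      0 ≤ ∫ x, V'' x * exp (-V x) ∂μ := by
  have hderiv (x : E) : HasLineDerivAt ℝ (fun y => V' y * exp (-V y))
      (V'' x * exp (-V x) - V' x ^ 2 * exp (-V x)) x u := by
    simpa only [sq] using hasLineDerivAt_mul_exp_neg (hV x) (hV' x)
  have hdiff : ∫ x, (V'' x * exp (-V x) - V' x ^ 2 * exp (-V x)) ∂μ = 0 :=
    integral_eq_zero_of_hasLineDerivAt_of_tendsto_cobounded hderiv (h1.sub h2) hdecay
  have heq : ∫ x, V'' x * exp (-V x) ∂μ = ∫ x, V' x ^ 2 * exp (-V x) ∂μ := by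
    rwa [integral_sub h1 h2, sub_eq_zero] at hdiff
  exact ⟨heq, heq ▸ integral_nonneg fun x => by positivity⟩

end Boltzmann

/-- Multidimensional integration by parts in a fixed direction `u`:
`∫ ⟨u, Hess V(x) u⟩ e^{-V} dx = ∫ ⟨u, ∇V(x)⟩² e^{-V} dx ≥ 0`. -/
theorem stmt_16 {n : ℕ} (V : EuclideanSpace ℝ (Fin n) → ℝ) (hV : ContDiff ℝ 2 V)
    (u : EuclideanSpace ℝ (Fin n))
    (h1 : Integrable (fun x => iteratedFDeriv ℝ 2 V x ![u, u] * Real.exp (-V x)))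
    (h2 : Integrable (fun x => ⟪u, gradient V x⟫ ^ 2 * Real.exp (-V x)))
    (hdecay : Tendsto (fun x => ⟪u, gradient V x⟫ * Real.exp (-V x))
      (Bornology.cobounded (EuclideanSpace ℝ (Fin n))) (nhds 0)) :
    (∫ x, iteratedFDeriv ℝ 2 V x ![u, u] * Real.exp (-V x)) =
      (∫ x, ⟪u, gradient V x⟫ ^ 2 * Real.exp (-V x)) ∧
    0 ≤ ∫ x, iteratedFDeriv ℝ 2 V x ![u, u] * Real.exp (-V x) := by
  have hdV : Differentiable ℝ (fderiv ℝ V) := (hV.fderiv_right le_rfl).differentiable one_ne_zero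
  exact stmt_16_general (fun x => hasLineDerivAt_inner_gradient (hV.differentiable two_ne_zero x) u)
    (fun x => hasLineDerivAt_inner_gradient_iteratedFDeriv (hdV x) u u) h1 h2 hdecay
end

section
/- Let H be a real Hilbert space and P : [0,∞) → (H →L H) a strongly continuous semigroup of self-adjoint contractions: P(0) = id, P(s+t) = P(s) ∘ P(t), each P(t) is self-adjoint with operator norm at most 1, and t ↦ P(t)f is continuous for each f. Let c > 0 and let C be a dense subset of H such that for every f ∈ C there is a constant c_f with ‖P(t)f‖² ≤ c_f · e^{−ct} for all t ≥ 0. Then for every f ∈ H and every t ≥ 0, ‖P(t)f‖² ≤ e^{−ct} · ‖f‖². -/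
open Set
open scoped RealInnerProductSpace

/-!
If `T` is symmetric, then `‖T f‖² = re ⟪f, T² f⟫ ≤ ‖f‖ ‖T² f‖`, so `n ↦ ‖Tⁿ f‖` is log-convex
and its successive ratios never fall below the first one, `‖T f‖ / ‖f‖`. Hence `‖Tⁿ f‖ = O(rⁿ)`,
with any constant, already forces `‖T f‖ ≤ r ‖f‖`. Applied to `T = P t`, this removes the prefactor
from the decay of `P`, and the resulting bound is a closed condition on `f`.
-/

open Asymptotics Filter

section LogConvexSequence

variable {a : ℕ → ℝ}

lemma apply_one_mul_le_of_sq_le_mul (ha : ∀ n, 0 ≤ a n)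
    (hconv : ∀ n, a (n + 1) ^ 2 ≤ a n * a (n + 2)) (n : ℕ) :
    a 1 * a n ≤ a (n + 1) * a 0 := by
  induction n with
  | zero => exact le_rfl
  | succ n ih =>
    rcases (ha n).eq_or_lt with hzero | hpos
    · have hsucc : a (n + 1) ^ 2 ≤ 0 := by simpa only [← hzero, zero_mul] using hconv n
      rw [(sq_nonpos_iff _).mp hsucc, mul_zero]
      exact mul_nonneg (ha (n + 2)) (ha 0)
    · refine le_of_mul_le_mul_right ?_ hpos
      calc a 1 * a (n + 1) * a n = a (n + 1) * (a 1 * a n) := by ring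
        _ ≤ a (n + 1) * (a (n + 1) * a 0) := mul_le_mul_of_nonneg_left ih (ha _)
        _ = a (n + 1) ^ 2 * a 0 := by ring
        _ ≤ a n * a (n + 2) * a 0 := mul_le_mul_of_nonneg_right (hconv n) (ha 0)
        _ = a (n + 2) * a 0 * a n := by ring

lemma apply_one_pow_mul_le_of_sq_le_mul (ha : ∀ n, 0 ≤ a n)
    (hconv : ∀ n, a (n + 1) ^ 2 ≤ a n * a (n + 2)) (n : ℕ) :
    a 1 ^ n * a 0 ≤ a n * a 0 ^ n := by
  induction n with
  | zero => simp
  | succ n ih =>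
    calc a 1 ^ (n + 1) * a 0 = a 1 * (a 1 ^ n * a 0) := by ring
      _ ≤ a 1 * (a n * a 0 ^ n) := mul_le_mul_of_nonneg_left ih (ha 1)
      _ = a 1 * a n * a 0 ^ n := by ring
      _ ≤ a (n + 1) * a 0 * a 0 ^ n :=
        mul_le_mul_of_nonneg_right (apply_one_mul_le_of_sq_le_mul ha hconv n) (pow_nonneg (ha 0) n)
      _ = a (n + 1) * a 0 ^ (n + 1) := by ring

end LogConvexSequence

lemma le_of_isBigO_pow_pow {x y : ℝ} (hy : 0 ≤ y)
    (h : (fun n : ℕ ↦ x ^ n) =O[atTop] fun n ↦ y ^ n) : x ≤ y := by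
  by_contra! hlt
  have hx : ∀ n : ℕ, x ^ n ≠ 0 := fun n ↦ pow_ne_zero n (hy.trans_lt hlt).ne'
  exact h.not_isLittleO (Frequently.of_forall hx) (isLittleO_pow_pow_of_lt_left hy hlt)

lemma apply_natCast_mul_eq_iterate {R X : Type*} [Semiring R] [PartialOrder R] [IsOrderedRing R]
    {Φ : R → X → X} (hΦ : ∀ s, 0 ≤ s → ∀ t, 0 ≤ t → Φ (s + t) = Φ s ∘ Φ t) {t : R} (ht : 0 ≤ t)
    {n : ℕ} (hn : 1 ≤ n) : Φ (n * t) = (Φ t)^[n] := by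
  induction n, hn using Nat.le_induction with
  | base => simp
  | succ n _ ih =>
    rw [Nat.cast_succ, add_one_mul, hΦ _ (by positivity) _ ht, ih, Function.iterate_succ]

section Symmetric

variable {𝕜 E : Type*} [RCLike 𝕜] [SeminormedAddCommGroup E] [InnerProductSpace 𝕜 E]

lemma norm_apply_sq_le_of_isSymmetric {T : E →ₗ[𝕜] E} (hT : T.IsSymmetric) (f : E) :
    ‖T f‖ ^ 2 ≤ ‖f‖ * ‖T (T f)‖ := by
  calc ‖T f‖ ^ 2 = RCLike.re (inner 𝕜 f (T (T f))) := by rw [← hT, inner_self_eq_norm_sq]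
    _ ≤ ‖f‖ * ‖T (T f)‖ := re_inner_le_norm f (T (T f))

lemma norm_apply_pow_mul_le_of_isSymmetric {T : E →ₗ[𝕜] E} (hT : T.IsSymmetric) (f : E) (n : ℕ) :
    ‖T f‖ ^ n * ‖f‖ ≤ ‖T^[n] f‖ * ‖f‖ ^ n := by
  refine apply_one_pow_mul_le_of_sq_le_mul (a := fun k ↦ ‖T^[k] f‖) (fun _ ↦ norm_nonneg _) ?_ n
  intro k
  simpa only [Function.iterate_succ_apply'] using norm_apply_sq_le_of_isSymmetric hT (T^[k] f)

theorem norm_apply_le_of_isBigO_iterate {T : E →ₗ[𝕜] E} (hT : T.IsSymmetric) {f : E} {r : ℝ}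
    (hr : 0 ≤ r) (h : (fun n : ℕ ↦ ‖T^[n] f‖) =O[atTop] fun n ↦ r ^ n) :
    ‖T f‖ ≤ r * ‖f‖ := by
  rcases (norm_nonneg f).eq_or_lt with hf | hf
  · have hTf : ‖T f‖ ^ 2 ≤ 0 := by
      simpa only [← hf, zero_mul] using norm_apply_sq_le_of_isSymmetric hT f
    rw [(sq_nonpos_iff _).mp hTf, ← hf, mul_zero]
  refine le_of_isBigO_pow_pow (by positivity) ?_
  calc (fun n : ℕ ↦ ‖T f‖ ^ n)
      =O[atTop] fun n ↦ ‖T^[n] f‖ * ‖f‖ ^ n := by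
        refine .of_bound ‖f‖⁻¹ (.of_forall fun n ↦ ?_)
        rw [← div_eq_inv_mul, le_div_iff₀ hf]
        simpa using norm_apply_pow_mul_le_of_isSymmetric hT f n
    _ =O[atTop] fun n ↦ r ^ n * ‖f‖ ^ n := h.mul (isBigO_refl _ _)
    _ = fun n ↦ (r * ‖f‖) ^ n := by simp only [mul_pow]

theorem norm_apply_sq_le_exp_mul_of_decay {P : ℝ → E →ₗ[𝕜] E}
    (hPsemi : ∀ s, 0 ≤ s → ∀ t, 0 ≤ t → P (s + t) = (P s).comp (P t))
    (hPsymm : ∀ t, 0 ≤ t → (P t).IsSymmetric) {c K : ℝ} {f : E}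
    (hdecay : ∀ t, 0 ≤ t → ‖P t f‖ ^ 2 ≤ K * Real.exp (-c * t)) {t : ℝ} (ht : 0 ≤ t) :
    ‖P t f‖ ^ 2 ≤ Real.exp (-c * t) * ‖f‖ ^ 2 := by
  set r := Real.exp (-c * t / 2)
  have hr : 0 ≤ r := Real.exp_nonneg _
  have hr_sq : r ^ 2 = Real.exp (-c * t) := by rw [← Real.exp_nat_mul]; congr 1; ring
  have hiter : ∀ n : ℕ, 1 ≤ n → ‖(P t)^[n] f‖ ^ 2 ≤ K * (r ^ n) ^ 2 := by
    intro n hn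
    have hexp : Real.exp (-c * (n * t)) = (r ^ n) ^ 2 := by
      rw [pow_right_comm, hr_sq, ← Real.exp_nat_mul, mul_left_comm]
    have hPn : ⇑(P (n * t)) = (P t)^[n] :=
      apply_natCast_mul_eq_iterate (Φ := fun s ↦ ⇑(P s))
        (fun s hs u hu ↦ congrArg DFunLike.coe (hPsemi s hs u hu)) ht hn
    rw [← hPn, ← hexp]
    exact hdecay _ (by positivity)
  have hbigO : (fun n : ℕ ↦ ‖(P t)^[n] f‖) =O[atTop] fun n ↦ r ^ n := by
    refine .of_pow two_ne_zero (.of_bound K ?_)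
    filter_upwards [eventually_ge_atTop 1] with n hn
    simpa only [Pi.pow_apply, norm_pow, norm_norm, Real.norm_of_nonneg hr] using hiter n hn
  calc ‖P t f‖ ^ 2 ≤ (r * ‖f‖) ^ 2 := by
        gcongr
        exact norm_apply_le_of_isBigO_iterate (hPsymm t ht) hr hbigO
    _ = Real.exp (-c * t) * ‖f‖ ^ 2 := by rw [mul_pow, hr_sq]

theorem stmt_17_general (P : ℝ → E →L[𝕜] E)
    (hPsemi : ∀ s, 0 ≤ s → ∀ t, 0 ≤ t → P (s + t) = (P s).comp (P t))
    (hPsymm : ∀ t, 0 ≤ t → (P t : E →ₗ[𝕜] E).IsSymmetric)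
    (c : ℝ) (C : Set E) (hC : Dense C)
    (hdecay : ∀ f ∈ C, ∃ cf : ℝ, ∀ t, 0 ≤ t → ‖P t f‖ ^ 2 ≤ cf * Real.exp (-c * t)) :
    ∀ f : E, ∀ t, 0 ≤ t → ‖P t f‖ ^ 2 ≤ Real.exp (-c * t) * ‖f‖ ^ 2 := by
  intro f t ht
  induction f using hC.induction with
  | mem f hf =>
    obtain ⟨cf, hcf⟩ := hdecay f hf
    exact norm_apply_sq_le_exp_mul_of_decay (P := fun s ↦ (P s : E →ₗ[𝕜] E))
      (fun s hs u hu ↦ congrArg _ (hPsemi s hs u hu)) hPsymm hcf ht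
  | isClosed => exact isClosed_le (by fun_prop) (by fun_prop)

end Symmetric

/-- Self-improvement of exponential decay for a strongly continuous
semigroup of self-adjoint contractions on a Hilbert space: decay with arbitrary prefactor
on a dense set upgrades to decay with prefactor `‖f‖²` everywhere. -/
theorem stmt_17 {H : Type*} [NormedAddCommGroup H] [InnerProductSpace ℝ H]
    [CompleteSpace H]
    (P : ℝ → H →L[ℝ] H)
    (hP0 : P 0 = ContinuousLinearMap.id ℝ H)
    (hPsemi : ∀ s, 0 ≤ s → ∀ t, 0 ≤ t → P (s + t) = (P s).comp (P t))
    (hPself : ∀ t, 0 ≤ t → ∀ u v : H, ⟪P t u, v⟫ = ⟪u, P t v⟫)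
    (hPcontr : ∀ t, 0 ≤ t → ‖P t‖ ≤ 1)
    (hPcont : ∀ f : H, ContinuousOn (fun t => P t f) (Set.Ici 0))
    (c : ℝ) (hc : 0 < c)
    (C : Set H) (hC : Dense C)
    (hdecay : ∀ f ∈ C, ∃ cf : ℝ, ∀ t, 0 ≤ t → ‖P t f‖ ^ 2 ≤ cf * Real.exp (-c * t)) :
    ∀ f : H, ∀ t, 0 ≤ t → ‖P t f‖ ^ 2 ≤ Real.exp (-c * t) * ‖f‖ ^ 2 :=
  stmt_17_general P hPsemi hPself c C hC hdecay
end
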